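/- arXiv:1507.01049 — 2 statements merged into one kernel-verified Lean document; each statement's English description precedes it below -/
import Mathlib

section
/- Let q ≥ 4 be a prime power with q ≡ 1 (mod 4) and q ∉ {5, 9, 29}. Then the group PSL(2,q) admits no factorization PSL(2,q) = AB with both A and B proper subgroups. -/
open Matrix
open scoped MatrixGroups

/-!
Preimages in `SL(2, q)` turn a factorization of `PSL(2, q)` into one by subgroups `A` and `B`
containing the center. Let them act on the projective line over the quadratic extension of the
field, where a noncentral element fixes two points, or one if it is parabolic. Counting fixed points
in a subgroup then yields a class equation with few solutions. In particular, a proper subgroup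
which contains a parabolic element and fixes no rational point is, as in Dickson's theorem, roughly
`SL(2, h)` with `h ^ 2 ≤ q`, or has order `120` with `h = 3`.

If `A` fixes a rational point, then `B` is transitive on the `q + 1` rational points. If `B` has
parabolic elements, then `q + 1` divides an order of Dickson's list, so `q = 9`. Otherwise the class
equation, together with the fact that elements of order four have rational fixed points when
`q ≡ 1 (mod 4)`, forces the stabilizer orders and leaves `q = 5` and `q = 29`. If neither factor
fixes a rational point, then both contain parabolic elements because `q` divides `|A| * |B|`, and
`(q - 1) * q * (q + 1)` divides a product of two orders of Dickson's list only for `q = 9`.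
-/

namespace SLTwo

open MulAction OnePoint Matrix.SpecialLinearGroup

/-! ### Group actions and factorizations -/

section GroupAction

variable {G α : Type*} [Group G] [MulAction G α]

lemma card_inf_stabilizer_mul_ncard_orbit (H : Subgroup G) (x : α) :
    Nat.card ↥(H ⊓ stabilizer G x) * (orbit H x).ncard = Nat.card H := by
  have horbit : (H ⊓ stabilizer G x).relIndex H = (orbit H x).ncard := by
    rw [Subgroup.inf_relIndex_left]
    exact index_stabilizer H x
  rw [← horbit, ← Subgroup.relIndex_bot_left, ← Subgroup.relIndex_bot_left,
    Subgroup.relIndex_mul_relIndex _ _ _ bot_le inf_le_left]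

lemma card_modEq_ncard_fixedBy [Finite α] {p : ℕ} [Fact p.Prime] {g : G} (hg : g ^ p = 1) :
    Nat.card α ≡ (fixedBy α g).ncard [MOD p] := by
  have hp : IsPGroup p (Subgroup.zpowers g) := by
    rintro ⟨_, n, rfl⟩
    refine ⟨1, Subtype.ext ?_⟩
    change (g ^ n) ^ p ^ 1 = 1
    rw [pow_one, ← zpow_natCast, zpow_comm, zpow_natCast, hg, _root_.one_zpow]
  have hfix : fixedPoints (Subgroup.zpowers g) α = fixedBy α g := by
    ext x
    rw [← mem_fixedBy_zpowers_iff_mem_fixedBy]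
    exact Subgroup.forall_zpowers
  have h := hp.card_modEq_card_fixedPoints α
  rwa [hfix] at h

-- Modulo `p`, both `g` and `k` have as many fixed points in the orbit of `x` as it has points.
lemma mem_orbit_of_fixedBy_eq_singleton [Finite α] {p : ℕ} [Fact p.Prime] {g k : G} {x y : α}
    (hg : g ^ p = 1) (hk : k ^ p = 1) (hx : fixedBy α g = {x}) (hy : fixedBy α k = {y}) :
    y ∈ orbit G x := by
  have hgx : fixedBy (orbit G x) g = {⟨x, mem_orbit_self x⟩} := by
    ext z
    simpa [Subtype.ext_iff] using Set.ext_iff.1 hx z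
  have hcard : (fixedBy (orbit G x) k).ncard ≡ 1 [MOD p] := by
    rw [← Set.ncard_singleton (⟨x, mem_orbit_self x⟩ : orbit G x), ← hgx]
    exact (card_modEq_ncard_fixedBy hk).symm.trans (card_modEq_ncard_fixedBy hg)
  have hne : (fixedBy (orbit G x) k).Nonempty := by
    rw [Set.nonempty_iff_ne_empty]
    intro h0
    rw [h0, Set.ncard_empty] at hcard
    exact (Fact.out : p.Prime).not_dvd_one ((Nat.modEq_iff_dvd' zero_le_one).1 hcard)
  obtain ⟨z, hz⟩ := hne
  have hzy : (z : α) = y := by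
    rw [← Set.mem_singleton_iff, ← hy]
    exact congrArg Subtype.val hz
  exact hzy ▸ z.2

lemma sum_ncard_orbit [Finite α] [Fintype (orbitRel.Quotient G α)] :
    ∑ ω : orbitRel.Quotient G α, ω.orbit.ncard = Nat.card α := by
  rw [Nat.card_congr (selfEquivSigmaOrbits' G α), Nat.card_sigma]
  rfl

lemma sum_ncard_fixedBy [Fintype G] [Finite α] :
    ∑ g : G, (fixedBy α g).ncard = Nat.card (orbitRel.Quotient G α) * Nat.card G := by
  classical
  have := Fintype.ofFinite α
  have hburnside := sum_card_fixedBy_eq_card_orbits_mul_card_group G α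
  simp_rw [← Nat.card_eq_fintype_card, Nat.card_coe_set_eq] at hburnside
  exact hburnside

lemma ncard_inter_fixing_smul {H : Subgroup G} {S : Set G}
    (hS : ∀ h ∈ H, ∀ s ∈ S, h * s * h⁻¹ ∈ S) {h : G} (hh : h ∈ H) (x : α) :
    {s | s ∈ S ∧ s • h • x = h • x}.ncard = {s | s ∈ S ∧ s • x = x}.ncard := by
  suffices {s | s ∈ S ∧ s • h • x = h • x} = MulAut.conj h '' {s | s ∈ S ∧ s • x = x} by
    rw [this, Set.ncard_image_of_injective _ (MulAut.conj h).injective]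
  ext s
  constructor
  · rintro ⟨hs, hfix⟩
    refine ⟨h⁻¹ * s * h, ⟨?_, ?_⟩, by simp [mul_assoc]⟩
    · simpa using hS h⁻¹ (H.inv_mem hh) s hs
    · rw [mul_smul, mul_smul, hfix, inv_smul_smul]
  · rintro ⟨t, ⟨ht, hfix⟩, rfl⟩
    refine ⟨hS h hh t ht, ?_⟩
    rw [MulAut.conj_apply, mul_smul, mul_smul, inv_smul_smul, hfix]

lemma ncard_eq_ncard_orbit_mul [Finite G] {H : Subgroup G} {S : Set G} {x : α}
    (hS : ∀ h ∈ H, ∀ s ∈ S, h * s * h⁻¹ ∈ S)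
    (hfix : ∀ s ∈ S, ∃! y, y ∈ orbit H x ∧ s • y = y) :
    S.ncard = (orbit H x).ncard * {s | s ∈ S ∧ s • x = x}.ncard := by
  have : Finite (orbit H x) := Set.finite_range fun h : H ↦ h • x
  have := Fintype.ofFinite (orbit H x)
  choose y hy hyu using hfix
  let e : S ≃ Σ z : orbit H x, {s | s ∈ S ∧ s • (z : α) = z} :=
    { toFun := fun s ↦ ⟨⟨y s s.2, (hy s s.2).1⟩, s, s.2, (hy s s.2).2⟩
      invFun := fun zs ↦ ⟨zs.2, zs.2.2.1⟩
      left_inv := fun _ ↦ rfl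
      right_inv := by
        rintro ⟨⟨z, hz⟩, s, hs, hsz⟩
        obtain rfl := hyu s hs z ⟨hz, hsz⟩
        rfl }
  have hcard (z : orbit H x) : Nat.card {s | s ∈ S ∧ s • (z : α) = z} =
      {s | s ∈ S ∧ s • x = x}.ncard := by
    obtain ⟨_, h, rfl⟩ := z
    exact ncard_inter_fixing_smul hS h.2 x
  rw [← Nat.card_coe_set_eq, Nat.card_congr e, Nat.card_sigma,
    Finset.sum_congr rfl fun z _ ↦ hcard z, Finset.sum_const, Finset.card_univ, smul_eq_mul,
    ← Nat.card_eq_fintype_card, Nat.card_coe_set_eq]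

end GroupAction

section Factorization

variable {G α : Type*} [Group G] [MulAction G α] {A B : Subgroup G}

lemma orbit_eq_orbit_of_factorization {x : α}
    (hAB : ∀ g : G, ∃ a ∈ A, ∃ b ∈ B, g = a * b) (hA : A ≤ stabilizer G x) :
    orbit B x = orbit G x := by
  refine (orbit_subgroup_subset B x).antisymm ?_
  rintro _ ⟨g, rfl⟩
  obtain ⟨a, ha, b, hb, hg⟩ := hAB g⁻¹
  refine ⟨⟨b⁻¹, B.inv_mem hb⟩, ?_⟩
  have hg' : g = b⁻¹ * a⁻¹ := by rw [← inv_inv g, hg]; group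
  simp only [hg', mul_smul, Subgroup.mk_smul, mem_stabilizer_iff.1 (hA (A.inv_mem ha))]

lemma card_dvd_card_mul_card_of_factorization
    (hAB : ∀ g : G, ∃ a ∈ A, ∃ b ∈ B, g = a * b) : Nat.card G ∣ Nat.card A * Nat.card B := by
  have htrans : orbit A ((1 : G) : G ⧸ B) = Set.univ := by
    refine Set.eq_univ_of_forall fun y ↦ ?_
    obtain ⟨g, rfl⟩ := QuotientGroup.mk_surjective y
    obtain ⟨a, ha, b, hb, rfl⟩ := hAB g
    refine ⟨⟨a, ha⟩, ?_⟩
    rw [QuotientGroup.mk_mul_of_mem a hb]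
    exact congrArg _ (mul_one a)
  have hdvd : B.index ∣ Nat.card A := by
    rw [Subgroup.index, ← Set.ncard_univ, ← htrans, ← index_stabilizer]
    exact Subgroup.index_dvd_card _
  rw [← B.index_mul_card]
  exact Nat.mul_dvd_mul_right hdvd _

lemma factorization_symm (hAB : ∀ g, ∃ a ∈ A, ∃ b ∈ B, g = a * b) :
    ∀ g, ∃ b ∈ B, ∃ a ∈ A, g = b * a := by
  intro g
  obtain ⟨a, ha, b, hb, hg⟩ := hAB g⁻¹
  exact ⟨b⁻¹, B.inv_mem hb, a⁻¹, A.inv_mem ha, by rw [← _root_.mul_inv_rev, ← hg, inv_inv]⟩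

lemma factorization_comap {G Q : Type*} [Group G] [Group Q] {f : G →* Q}
    (hf : Function.Surjective f) {A B : Subgroup Q} (hAB : ∀ g, ∃ a ∈ A, ∃ b ∈ B, g = a * b) :
    ∀ g, ∃ a ∈ A.comap f, ∃ b ∈ B.comap f, g = a * b := by
  intro g
  obtain ⟨a, ha, b, hb, hg⟩ := hAB (f g)
  obtain ⟨m, rfl⟩ := hf a
  refine ⟨m, ha, m⁻¹ * g, ?_, (mul_inv_cancel_left m g).symm⟩
  rwa [Subgroup.mem_comap, map_mul, map_inv, hg, inv_mul_cancel_left]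

end Factorization

lemma ringChar_ne_two {R : Type*} [NonAssocRing R] [NeZero (2 : R)] : ringChar R ≠ 2 := fun h ↦
  two_ne_zero (α := R) (by exact_mod_cast h ▸ CharP.cast_eq_zero R (ringChar R))

section Combinatorics

variable {ι : Type*} {s : Finset ι} {c : ι → ℕ} {R : ℕ}

lemma exists_eq_sum_of_lt_two_mul (hsum : ∑ i ∈ s, c i = R) (hR : R ≠ 0)
    (hc : ∀ i ∈ s, c i ≠ 0 → R < 2 * c i) : ∃ i ∈ s, c i = R := by
  classical
  obtain ⟨i, hi, hi0⟩ := Finset.exists_ne_zero_of_sum_ne_zero (hsum ▸ hR)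
  refine ⟨i, hi, ?_⟩
  rw [← hsum, Finset.sum_eq_single_of_mem i hi]
  intro j hj hji
  by_contra hj0
  have hle : c i + c j ≤ R := by
    rw [← hsum, ← Finset.add_sum_erase s c hi]
    gcongr
    exact Finset.single_le_sum_of_canonicallyOrdered (Finset.mem_erase.2 ⟨hji, hj⟩)
  have := hc i hi hi0
  have := hc j hj hj0
  lia

lemma exists_add_eq_sum_of_lt_three_mul (hsum : ∑ i ∈ s, c i = R) (hR : R ≠ 0)
    (hc : ∀ i ∈ s, c i ≠ 0 → R < 3 * c i ∧ c i < R) :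
    ∃ i ∈ s, ∃ j ∈ s, c i ≠ 0 ∧ c j ≠ 0 ∧ c i + c j = R := by
  classical
  obtain ⟨i, hi, hi0⟩ := Finset.exists_ne_zero_of_sum_ne_zero (hsum ▸ hR)
  have hiR := hc i hi hi0
  have herase : ∑ j ∈ s.erase i, c j = R - c i := by
    rw [← hsum, ← Finset.add_sum_erase s c hi, Nat.add_sub_cancel_left]
  obtain ⟨j, hj, hjR⟩ := exists_eq_sum_of_lt_two_mul herase (by lia) fun j hj hj0 ↦ by
    have := hc j (Finset.mem_of_mem_erase hj) hj0
    lia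
  exact ⟨i, hi, j, Finset.mem_of_mem_erase hj, hi0, by lia, by lia⟩

end Combinatorics

/-! ### The projective line over an extension field -/

lemma mem_range_scalar_fin_two_iff {R : Type*} [Semiring R] {A : Matrix (Fin 2) (Fin 2) R} :
    A ∈ Set.range (scalar (Fin 2)) ↔ A 0 1 = 0 ∧ A 1 0 = 0 ∧ A 0 0 = A 1 1 := by
  constructor
  · rintro ⟨r, rfl⟩
    simp
  · rintro ⟨h01, h10, h⟩
    refine ⟨A 0 0, ?_⟩
    ext i j
    fin_cases i <;> fin_cases j <;> simp [h01, h10, h]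

open scoped Classical in
lemma ncard_fixedBy_of_isSquare_discr {K : Type*} [Field K] [NeZero (2 : K)] {g : GL (Fin 2) K}
    (hsq : IsSquare g.val.discr) (h0 : g.val.discr ≠ 0) :
    (fixedBy (OnePoint K) g).ncard = 2 := by
  obtain ⟨s, hs⟩ := hsq
  have hs0 : s ≠ 0 := by rintro rfl; simp [hs] at h0
  rw [discr_fin_two, trace_fin_two, det_fin_two] at hs
  have hfix (x : K) : g • (x : OnePoint K) = x ↔
      g 1 0 * (x * x) + (g 1 1 - g 0 0) * x + -g 0 1 = 0 := by
    rw [← GeneralLinearGroup.fixpointPolynomial_aeval_eq_zero_iff]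
    simp [GeneralLinearGroup.fixpointPolynomial, sub_eq_add_neg, pow_two]
  by_cases hc : g 1 0 = 0
  · have hda : g 1 1 - g 0 0 ≠ 0 := by
      intro hda
      refine hs0 (mul_self_eq_zero.1 ?_)
      linear_combination -hs + (g 1 1 - g 0 0) * hda + 4 * g 0 1 * hc
    suffices fixedBy (OnePoint K) g = {∞, ((g 0 1 / (g 1 1 - g 0 0) : K) : OnePoint K)} by
      rw [this, Set.ncard_pair (infty_ne_coe _)]
    ext x
    cases x with
    | infty => simpa [smul_infty_eq_self_iff] using hc
    | coe x => simp [hfix, hc, eq_div_iff hda, add_neg_eq_zero, mul_comm]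
  · suffices fixedBy (OnePoint K) g =
        {(((-(g 1 1 - g 0 0) + s) / (2 * g 1 0) : K) : OnePoint K),
          (((-(g 1 1 - g 0 0) - s) / (2 * g 1 0) : K) : OnePoint K)} by
      rw [this, Set.ncard_pair]
      intro h
      rw [coe_eq_coe, div_left_inj' (mul_ne_zero two_ne_zero hc)] at h
      refine mul_ne_zero two_ne_zero hs0 ?_
      linear_combination h
    ext x
    cases x with
    | infty => simpa [smul_infty_eq_self_iff] using hc
    | coe x =>
      have hdiscrim : discrim (g 1 0) (g 1 1 - g 0 0) (-g 0 1) = s * s := by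
        rw [discrim]; linear_combination hs
      simp [hfix, quadratic_eq_zero_iff hc hdiscrim]

section Action

variable {F K : Type*} [Field F] [Field K] [Algebra F K]

open scoped Classical in
/-- The action of `SL(2, F)` by Möbius transformations on the projective line over an extension
field `K` of `F`. -/
noncomputable instance : MulAction SL(2, F) (OnePoint K) := compHom _ (mapGL K)

open scoped Classical in
lemma mapGL_smul (M : SL(2, F)) (x : OnePoint K) : mapGL K M • x = M • x := rfl

lemma smul_infty_eq_self_iff {M : SL(2, F)} : M • (∞ : OnePoint K) = ∞ ↔ M 1 0 = 0 := by
  classical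
  rw [← mapGL_smul, OnePoint.smul_infty_eq_self_iff]
  simp

lemma neg_one_smul (x : OnePoint K) : (-1 : SL(2, F)) • x = x := by
  classical
  cases x with
  | infty => exact smul_infty_eq_self_iff.2 (by simp)
  | coe x => simp [← mapGL_smul, smul_some_eq_ite]

lemma neg_smul (M : SL(2, F)) (x : OnePoint K) : -M • x = M • x := by
  rw [neg_eq_neg_one_mul, mul_smul, neg_one_smul]

lemma map_algebraMap_smul (M : SL(2, F)) (x : OnePoint F) :
    (M • x).map (algebraMap F K) = M • x.map (algebraMap F K) := by
  classical
  rw [← mapGL_smul, ← mapGL_smul, OnePoint.map_smul]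
  rfl

lemma discr_eq_trace_sq_sub_four (M : SL(2, F)) :
    M.1.discr = M.1.trace ^ 2 - 4 := by
  rw [discr_fin_two, M.2, mul_one]

lemma mem_range_scalar_iff_mem_center {M : SL(2, F)} :
    M.1 ∈ Set.range (scalar (Fin 2)) ↔ M ∈ Subgroup.center SL(2, F) := by
  rw [mem_center_iff]
  refine ⟨fun ⟨r, hr⟩ ↦ ⟨r, ?_, hr⟩, fun ⟨r, _, hr⟩ ↦ ⟨r, hr⟩⟩
  rw [Fintype.card_fin, ← M.2, ← hr]
  simp

lemma isParabolic_iff {M : SL(2, F)} :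
    M.1.IsParabolic ↔ M ∉ Subgroup.center SL(2, F) ∧ M.1.discr = 0 := by
  rw [IsParabolic, mem_range_scalar_iff_mem_center]

lemma mem_center_iff_eq_one_or_eq_neg_one {M : SL(2, F)} :
    M ∈ Subgroup.center SL(2, F) ↔ M = 1 ∨ M = -1 := by
  rw [← mem_range_scalar_iff_mem_center]
  constructor
  · rintro ⟨r, hr⟩
    have hr2 : r * r = 1 := by
      rw [← M.2, ← hr]; simp [pow_two]
    rcases mul_self_eq_one_iff.1 hr2 with rfl | rfl
    · exact .inl (Subtype.ext (by rw [← hr, map_one]; rfl))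
    · exact .inr (Subtype.ext (by rw [← hr, map_neg, map_one]; rfl))
  · rintro (rfl | rfl)
    · exact ⟨1, map_one _⟩
    · exact ⟨-1, by rw [map_neg, map_one]; rfl⟩

lemma neg_mem_of_center_le {H : Subgroup SL(2, F)} (hZ : Subgroup.center SL(2, F) ≤ H)
    {M : SL(2, F)} (hM : M ∈ H) : -M ∈ H := by
  rw [neg_eq_neg_one_mul]
  exact H.mul_mem (hZ (mem_center_iff_eq_one_or_eq_neg_one.2 (.inr rfl))) hM

lemma smul_eq_self_of_mem_center {M : SL(2, F)} (hM : M ∈ Subgroup.center SL(2, F))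
    (x : OnePoint K) : M • x = x := by
  rcases mem_center_iff_eq_one_or_eq_neg_one.1 hM with rfl | rfl
  · exact one_smul _ _
  · exact neg_one_smul x

lemma one_ne_neg_one [NeZero (2 : F)] : (1 : SL(2, F)) ≠ -1 := by
  intro h
  refine two_ne_zero (α := F) ?_
  have h00 : (1 : F) = -1 := congrArg (fun M : SL(2, F) ↦ M 0 0) h
  linear_combination h00

lemma card_center [NeZero (2 : F)] : Nat.card (Subgroup.center SL(2, F)) = 2 := by
  have hcenter : (Subgroup.center SL(2, F) : Set SL(2, F)) = {1, -1} :=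
    Set.ext fun M ↦ mem_center_iff_eq_one_or_eq_neg_one
  calc Nat.card (Subgroup.center SL(2, F))
      = (Subgroup.center SL(2, F) : Set SL(2, F)).ncard := rfl
    _ = 2 := by rw [hcenter, Set.ncard_pair one_ne_neg_one]

lemma discr_mapGL (M : SL(2, F)) : (mapGL K M).val.discr = algebraMap F K M.1.discr := by
  have h4 : algebraMap F K 4 = 4 := map_ofNat _ 4
  simp only [discr_fin_two, trace_fin_two, det_fin_two, mapGL_coe_matrix, map_apply_coe,
    RingHom.mapMatrix_apply, map_apply, map_sub, map_pow, map_add, map_mul, h4]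

variable (F K) in
lemma neZero_two_extension [NeZero (2 : F)] : NeZero (2 : K) := by
  exact_mod_cast NeZero.of_faithfulSMul F K 2

lemma ncard_fixedBy_of_isParabolic [NeZero (2 : F)] {M : SL(2, F)} (hM : M.1.IsParabolic) :
    (fixedBy (OnePoint K) M).ncard = 1 := by
  classical
  have := neZero_two_extension F K
  have hpar : (mapGL K M).IsParabolic := by
    refine ⟨fun hscalar ↦ hM.1 ?_, by rw [discr_mapGL, hM.2, map_zero]⟩
    rw [mem_range_scalar_fin_two_iff] at hscalar ⊢
    simpa using hscalar
  rw [Set.ncard_eq_one]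
  exact ⟨_, Set.ext fun x ↦ hpar.smul_eq_self_iff⟩

lemma ncard_fixedBy_of_not_isParabolic [NeZero (2 : F)] {M : SL(2, F)}
    (hM : M ∉ Subgroup.center SL(2, F)) (hpar : ¬ M.1.IsParabolic)
    (hsq : IsSquare (algebraMap F K M.1.discr)) : (fixedBy (OnePoint K) M).ncard = 2 := by
  classical
  have := neZero_two_extension F K
  have h0 : M.1.discr ≠ 0 := fun h0 ↦ hpar (isParabolic_iff.2 ⟨hM, h0⟩)
  rw [← discr_mapGL] at hsq
  refine ncard_fixedBy_of_isSquare_discr hsq ?_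
  rwa [discr_mapGL, Ne, FaithfulSMul.algebraMap_eq_zero_iff]

end Action

/-! ### The class equation -/

instance {X : Type*} [Finite X] : Finite (OnePoint X) := inferInstanceAs (Finite (Option X))

section ClassEquation

variable {F K : Type*} [Field F] [Field K] [Algebra F K]

/-- The set of parabolic elements of a subgroup of `SL(2, F)`. -/
def parabolics (H : Subgroup SL(2, F)) : Set SL(2, F) := {M | M ∈ H ∧ M.1.IsParabolic}

lemma card_filter_coe_eq_ncard {G : Type*} [Group G] (H : Subgroup G) [Fintype H] (P : G → Prop)
    [DecidablePred fun g : H ↦ P g] :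
    (Finset.univ.filter fun g : H ↦ P g).card = {g | g ∈ H ∧ P g}.ncard := by
  rw [← Set.ncard_coe_finset, ← Set.ncard_image_of_injective _ Subtype.val_injective]
  congr 1
  ext g
  simp [and_comm]

lemma card_center_filter [NeZero (2 : F)] {H : Subgroup SL(2, F)} [Fintype H]
    [DecidablePred fun M : H ↦ M.1 ∈ Subgroup.center SL(2, F)]
    (hZ : Subgroup.center SL(2, F) ≤ H) :
    (Finset.univ.filter fun M : H ↦ M.1 ∈ Subgroup.center SL(2, F)).card = 2 := by
  have hset : {M | M ∈ H ∧ M ∈ Subgroup.center SL(2, F)} = Subgroup.center SL(2, F) :=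
    Set.ext fun M ↦ and_iff_right_of_imp (@hZ M)
  rw [card_filter_coe_eq_ncard H (· ∈ Subgroup.center SL(2, F)), hset]
  exact card_center

lemma center_le_stabilizer (x : OnePoint K) :
    Subgroup.center SL(2, F) ≤ stabilizer SL(2, F) x :=
  fun _ hM ↦ smul_eq_self_of_mem_center hM x

open scoped Classical in
lemma ncard_fixedBy_add_ite [NeZero (2 : F)] (hK : ∀ a : F, IsSquare (algebraMap F K a))
    (M : SL(2, F)) : (fixedBy (OnePoint K) M).ncard + (if M.1.IsParabolic then 1 else 0) =
      if M ∈ Subgroup.center SL(2, F) then Nat.card (OnePoint K) else 2 := by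
  by_cases hM : M ∈ Subgroup.center SL(2, F)
  · have hfix : fixedBy (OnePoint K) M = Set.univ :=
      Set.eq_univ_of_forall (smul_eq_self_of_mem_center hM)
    simp [isParabolic_iff, hM, hfix, Set.ncard_univ]
  · by_cases hpar : M.1.IsParabolic
    · simp [hM, hpar, ncard_fixedBy_of_isParabolic hpar]
    · simp [hM, hpar, ncard_fixedBy_of_not_isParabolic hM hpar (hK _)]

variable [NeZero (2 : F)]

lemma two_dvd_card_of_center_le {H : Subgroup SL(2, F)}
    (hZ : Subgroup.center SL(2, F) ≤ H) : 2 ∣ Nat.card H :=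
  (dvd_of_eq card_center.symm).trans (Subgroup.card_dvd_of_le hZ)

variable [Finite F]

lemma two_mul_ncard_orbit_le_card {H : Subgroup SL(2, F)}
    (hZ : Subgroup.center SL(2, F) ≤ H) (x : OnePoint K) :
    2 * (orbit H x).ncard ≤ Nat.card H := by
  rw [← card_inf_stabilizer_mul_ncard_orbit H x]
  have h2 := two_dvd_card_of_center_le (le_inf hZ (center_le_stabilizer x))
  gcongr
  exact Nat.le_of_dvd Nat.card_pos h2

variable [Finite K]

lemma card_orbits_mul_card_add_ncard_parabolics (hK : ∀ a : F, IsSquare (algebraMap F K a))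
    {H : Subgroup SL(2, F)} (hZ : Subgroup.center SL(2, F) ≤ H) :
    Nat.card (orbitRel.Quotient H (OnePoint K)) * Nat.card H + (parabolics H).ncard =
      2 * Nat.card (OnePoint K) + 2 * (Nat.card H - 2) := by
  classical
  have := Fintype.ofFinite H
  have hsum := Finset.sum_congr (Eq.refl (Finset.univ (α := H)))
    fun M _ ↦ ncard_fixedBy_add_ite hK M.1
  rw [Finset.sum_add_distrib, ← Finset.card_filter, card_filter_coe_eq_ncard H (·.1.IsParabolic),
    Finset.sum_ite, Finset.sum_const, Finset.sum_const, card_center_filter hZ,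
    ← Finset.compl_filter, Finset.card_compl, card_center_filter hZ] at hsum
  rw [← sum_ncard_fixedBy, Nat.card_eq_fintype_card (α := H), mul_comm 2 (_ - 2)]
  exact hsum

lemma sum_card_sub_two_mul_ncard_orbit_add_ncard_parabolics
    (hK : ∀ a : F, IsSquare (algebraMap F K a))
    {H : Subgroup SL(2, F)} (hZ : Subgroup.center SL(2, F) ≤ H)
    [Fintype (orbitRel.Quotient H (OnePoint K))] :
    ∑ ω : orbitRel.Quotient H (OnePoint K), (Nat.card H - 2 * ω.orbit.ncard) +
      (parabolics H).ncard = 2 * (Nat.card H - 2) := by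
  have hle (ω : orbitRel.Quotient H (OnePoint K)) : 2 * ω.orbit.ncard ≤ Nat.card H := by
    induction ω using Quotient.inductionOn' with
    | h x => exact two_mul_ncard_orbit_le_card hZ x
  have hsum : ∑ ω : orbitRel.Quotient H (OnePoint K), (Nat.card H - 2 * ω.orbit.ncard) +
      2 * Nat.card (OnePoint K) =
      Nat.card (orbitRel.Quotient H (OnePoint K)) * Nat.card H := by
    rw [← sum_ncard_orbit (G := H) (α := OnePoint K), Finset.mul_sum, ← Finset.sum_add_distrib,
      Finset.sum_congr rfl fun ω _ ↦ Nat.sub_add_cancel (hle ω)]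
    simp
  have := card_orbits_mul_card_add_ncard_parabolics hK hZ
  lia

end ClassEquation

/-! ### Rational points and parabolic elements -/

section Rationality

variable {F K : Type*} [Field F] [Field K] [Algebra F K]

lemma odd_natCard [NeZero (2 : F)] [Finite F] : Odd (Nat.card F) := by
  have := Fintype.ofFinite F
  rw [Nat.card_eq_fintype_card, Nat.odd_iff]
  exact FiniteField.odd_card_of_char_ne_two ringChar_ne_two

lemma isSquare_algebraMap_of_card_eq_sq [NeZero (2 : F)] [Finite F]
    (hK : Nat.card K = Nat.card F ^ 2) (a : F) : IsSquare (algebraMap F K a) := by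
  have := neZero_two_extension F K
  have : Finite K := Nat.finite_of_card_ne_zero (hK ▸ pow_ne_zero 2 Nat.card_pos.ne')
  have := Fintype.ofFinite F
  have := Fintype.ofFinite K
  obtain rfl | ha := eq_or_ne a 0
  · simp
  obtain ⟨k, hk⟩ := odd_natCard (F := F)
  have hexp : Nat.card K / 2 = (Nat.card F - 1) * (k + 1) := by
    rw [hK, hk, Nat.add_sub_cancel]
    lia
  rw [FiniteField.isSquare_iff ringChar_ne_two (by simpa using ha), ← Nat.card_eq_fintype_card,
    hexp, ← map_pow, pow_mul, Nat.card_eq_fintype_card, FiniteField.pow_card_sub_one_eq_one a ha,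
    one_pow, map_one]

lemma orbit_infty_eq_range_map :
    orbit SL(2, F) (∞ : OnePoint K) = Set.range (OnePoint.map (algebraMap F K)) := by
  classical
  ext y
  constructor
  · rintro ⟨M, rfl⟩
    exact ⟨M • ∞, map_algebraMap_smul M ∞⟩
  · rintro ⟨x, rfl⟩
    obtain ⟨M, rfl⟩ := exists_mem_SL2 F x
    exact ⟨M, (map_algebraMap_smul M ∞).symm⟩

lemma map_algebraMap_injective :
    Function.Injective (OnePoint.map (algebraMap F K)) :=
  Option.map_injective (algebraMap F K).injective

lemma ncard_orbit_infty [Finite F] :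
    (orbit SL(2, F) (∞ : OnePoint K)).ncard = Nat.card F + 1 := by
  rw [orbit_infty_eq_range_map, ← Set.image_univ,
    Set.ncard_image_of_injective _ map_algebraMap_injective, Set.ncard_univ]
  exact Finite.card_option

lemma ncard_fixedBy_eq_of_isSquare_discr [NeZero (2 : F)] {M : SL(2, F)}
    (hM : M ∉ Subgroup.center SL(2, F)) (hsq : IsSquare M.1.discr) :
    (fixedBy (OnePoint K) M).ncard = (fixedBy (OnePoint F) M).ncard := by
  by_cases hpar : M.1.IsParabolic
  · rw [ncard_fixedBy_of_isParabolic hpar, ncard_fixedBy_of_isParabolic hpar]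
  · rw [ncard_fixedBy_of_not_isParabolic hM hpar (hsq.map _),
      ncard_fixedBy_of_not_isParabolic hM hpar (by simpa)]

lemma ncard_fixedBy_ne_zero [NeZero (2 : F)] {M : SL(2, F)}
    (hM : M ∉ Subgroup.center SL(2, F)) (hsq : IsSquare (algebraMap F K M.1.discr)) :
    (fixedBy (OnePoint K) M).ncard ≠ 0 := by
  by_cases hpar : M.1.IsParabolic
  · simp [ncard_fixedBy_of_isParabolic hpar]
  · simp [ncard_fixedBy_of_not_isParabolic hM hpar hsq]

lemma image_map_fixedBy [NeZero (2 : F)] {M : SL(2, F)}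
    (hM : M ∉ Subgroup.center SL(2, F)) (hsq : IsSquare M.1.discr) :
    OnePoint.map (algebraMap F K) '' fixedBy (OnePoint F) M = fixedBy (OnePoint K) M := by
  refine Set.eq_of_subset_of_ncard_le ?_ ?_
    (Set.finite_of_ncard_ne_zero (ncard_fixedBy_ne_zero hM (hsq.map _)))
  · rintro _ ⟨x, hx, rfl⟩
    rw [mem_fixedBy, ← map_algebraMap_smul, mem_fixedBy.1 hx]
  · rw [Set.ncard_image_of_injective _ map_algebraMap_injective,
      ncard_fixedBy_eq_of_isSquare_discr hM hsq]

lemma fixedBy_subset_orbit_infty [NeZero (2 : F)] {M : SL(2, F)}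
    (hM : M ∉ Subgroup.center SL(2, F)) (hsq : IsSquare M.1.discr) :
    fixedBy (OnePoint K) M ⊆ orbit SL(2, F) ∞ := by
  rw [← image_map_fixedBy hM hsq, orbit_infty_eq_range_map]
  exact Set.image_subset_range _ _

end Rationality

section Parabolic

variable {F K : Type*} [Field F] [Field K] [Algebra F K]

lemma trace_eq_two_or_trace_neg_eq_two {M : SL(2, F)} (hM : M.1.IsParabolic) :
    M.1.trace = 2 ∨ (-M).1.trace = 2 := by
  have hdiscr := hM.2
  rw [discr_eq_trace_sq_sub_four] at hdiscr
  have hmul : (M.1.trace - 2) * (M.1.trace + 2) = 0 := by linear_combination hdiscr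
  rcases mul_eq_zero.1 hmul with h | h
  · exact .inl (sub_eq_zero.1 h)
  · right
    rw [coe_neg, trace_neg]
    linear_combination -h

variable {p : ℕ} [Fact p.Prime] [CharP F p]

lemma pow_char_eq_one_iff_trace_eq_two {M : SL(2, F)} : M ^ p = 1 ↔ M.1.trace = 2 := by
  have hpow : (M.1 - 1) ^ p = M.1 ^ p - 1 := by
    rw [sub_pow_char_of_commute p (Commute.one_right _), one_pow]
  have hM : M ^ p = 1 ↔ (M.1 - 1) ^ p = 0 := by
    rw [hpow, sub_eq_zero, ← coe_pow, ← coe_one]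
    exact Subtype.ext_iff
  rw [hM]
  constructor
  · intro h
    have := (isNilpotent_trace_of_isNilpotent ⟨p, h⟩).eq_zero
    rw [trace_sub, trace_one, Fintype.card_fin, sub_eq_zero] at this
    exact_mod_cast this
  · intro h
    have hsq : (M.1 - 1) ^ 2 = 0 := by
      have hcharpoly := aeval_self_charpoly M.1
      rw [charpoly_fin_two, M.2, h] at hcharpoly
      simp only [map_add, map_sub, map_mul, map_pow, Polynomial.aeval_X, map_one, map_ofNat]
        at hcharpoly
      rw [← hcharpoly]
      noncomm_ring
    exact pow_eq_zero_of_le (Fact.out : p.Prime).two_le hsq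

lemma isParabolic_of_pow_char_eq_one [NeZero (2 : F)] {M : SL(2, F)} (hM : M ^ p = 1)
    (h1 : M ≠ 1) : M.1.IsParabolic := by
  have htrace := pow_char_eq_one_iff_trace_eq_two.1 hM
  rw [isParabolic_iff, discr_eq_trace_sq_sub_four, htrace]
  refine ⟨fun hcenter ↦ ?_, by ring⟩
  rcases mem_center_iff_eq_one_or_eq_neg_one.1 hcenter with rfl | rfl
  · exact h1 rfl
  · rw [coe_neg, coe_one, trace_neg, trace_one, Fintype.card_fin] at htrace
    refine mul_ne_zero (two_ne_zero (α := F)) two_ne_zero ?_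
    push_cast at htrace
    linear_combination -htrace

lemma exists_pow_char_eq_one_of_isParabolic {H : Subgroup SL(2, F)}
    (hZ : Subgroup.center SL(2, F) ≤ H) {M : SL(2, F)} (hM : M ∈ H) (hpar : M.1.IsParabolic) :
    ∃ N ∈ H, N ^ p = 1 ∧ N ≠ 1 ∧ fixedBy (OnePoint K) N = fixedBy (OnePoint K) M := by
  have hcenter := (isParabolic_iff.1 hpar).1
  rw [mem_center_iff_eq_one_or_eq_neg_one] at hcenter
  rcases trace_eq_two_or_trace_neg_eq_two hpar with h | h
  · exact ⟨M, hM, pow_char_eq_one_iff_trace_eq_two.2 h, fun h1 ↦ hcenter (.inl h1), rfl⟩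
  · refine ⟨-M, neg_mem_of_center_le hZ hM, pow_char_eq_one_iff_trace_eq_two.2 h,
      fun h1 ↦ hcenter (.inr (neg_eq_iff_eq_neg.1 h1)), Set.ext fun x ↦ ?_⟩
    · rw [mem_fixedBy, mem_fixedBy, neg_smul]

lemma mem_orbit_of_isParabolic [NeZero (2 : F)] [Finite F] [Finite K] {H : Subgroup SL(2, F)}
    (hZ : Subgroup.center SL(2, F) ≤ H) {M N : SL(2, F)} (hM : M ∈ H) (hMpar : M.1.IsParabolic)
    (hN : N ∈ H) (hNpar : N.1.IsParabolic) {x y : OnePoint K} (hx : M • x = x) (hy : N • y = y) :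
    y ∈ orbit H x := by
  obtain ⟨p, _⟩ := CharP.exists F
  have : Fact p.Prime := ⟨CharP.char_is_prime F p⟩
  have hsingleton {L : SL(2, F)} (hL : L.1.IsParabolic) {z : OnePoint K} (hz : L • z = z) :
      fixedBy (OnePoint K) L = {z} := by
    obtain ⟨w, hw⟩ := Set.ncard_eq_one.1 (ncard_fixedBy_of_isParabolic (K := K) hL)
    have hzw : z ∈ fixedBy (OnePoint K) L := hz
    rw [hw, Set.mem_singleton_iff] at hzw
    rw [hw, hzw]
  obtain ⟨M', hM'H, hM'p, -, hM'⟩ :=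
    exists_pow_char_eq_one_of_isParabolic (K := K) (p := p) hZ hM hMpar
  obtain ⟨N', hN'H, hN'p, -, hN'⟩ :=
    exists_pow_char_eq_one_of_isParabolic (K := K) (p := p) hZ hN hNpar
  rw [hsingleton hMpar hx] at hM'
  rw [hsingleton hNpar hy] at hN'
  exact mem_orbit_of_fixedBy_eq_singleton (g := (⟨M', hM'H⟩ : H)) (k := (⟨N', hN'H⟩ : H))
    (p := p) (Subtype.ext hM'p) (Subtype.ext hN'p) hM' hN'

end Parabolic

/-! ### The Borel subgroup -/

section UnitSubgroups

lemma two_mul_card_map_powMonoidHom_two {R : Type*} [CommRing R] [IsDomain R] [NeZero (2 : R)]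
    [Finite R] {U : Subgroup Rˣ} (hU : -1 ∈ U) :
    2 * Nat.card (U.map (powMonoidHom 2)) = Nat.card U := by
  have horder : orderOf (-1 : Rˣ) = 2 := by
    rw [← orderOf_units, Units.val_neg, Units.val_one, orderOf_neg_one, if_neg ringChar_ne_two]
  have h2 : 2 ∣ Nat.card U := horder ▸ U.orderOf_dvd_natCard hU
  have hmap : U.map (powMonoidHom 2) = (powMonoidHom 2 : U →* U).range.map U.subtype := by
    rw [MonoidHom.range_eq_map, Subgroup.map_map,
      show U.subtype.comp (powMonoidHom 2) = (powMonoidHom 2).comp U.subtype from rfl,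
      ← Subgroup.map_map, ← MonoidHom.range_eq_map, U.range_subtype]
  rw [hmap, Subgroup.card_map_of_injective U.subtype_injective, IsCyclic.card_powMonoidHom_range,
    Nat.gcd_eq_right h2, Nat.mul_div_cancel' h2]

open scoped Pointwise in
lemma card_dvd_card_sub_one {F : Type*} [Field F] {U : AddSubgroup F} {D : Subgroup Fˣ}
    (hD : ∀ d ∈ D, ∀ u ∈ U, d * u ∈ U) : Nat.card D ∣ Nat.card U - 1 := by
  have hmul : {u : Fˣ | (u : F) ∈ U} * (D : Set Fˣ) = {u : Fˣ | (u : F) ∈ U} := by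
    refine Set.Subset.antisymm ?_ fun u hu ↦ ⟨u, hu, 1, D.one_mem, mul_one u⟩
    rintro _ ⟨u, hu, d, hd, rfl⟩
    simpa [mul_comm] using hD d hd u hu
  have hcard : Nat.card {u : Fˣ | (u : F) ∈ U} = Nat.card U - 1 := by
    have himage : ((↑) : Fˣ → F) '' {u : Fˣ | (u : F) ∈ U} = (U : Set F) \ {0} := by
      ext b
      constructor
      · rintro ⟨u, hu, rfl⟩
        exact ⟨hu, u.ne_zero⟩
      · rintro ⟨hb, hb0⟩
        exact ⟨.mk0 b hb0, hb, rfl⟩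
    rw [Nat.card_coe_set_eq, ← Set.ncard_image_of_injective _ Units.val_injective, himage,
      Set.ncard_sdiff_singleton_of_mem U.zero_mem]
    rfl
  have h := Subgroup.card_mul_eq_card_subgroup_mul_card_quotient D {u : Fˣ | (u : F) ∈ U}
  rw [hmul, hcard] at h
  exact Dvd.intro _ h.symm

end UnitSubgroups

section Borel

variable {F : Type*} [Field F]

/-- The unipotent matrix `!![1, b; 0, 1]`, which acts on the projective line as `x ↦ x + b`. -/
abbrev translation (b : F) : SL(2, F) := transvection (zero_ne_one : (0 : Fin 2) ≠ 1) b

lemma coe_translation (b : F) : (translation b : Matrix (Fin 2) (Fin 2) F) = !![1, b; 0, 1] := by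
  rw [transvection_coe]
  ext i j
  fin_cases i <;> fin_cases j <;> simp

/-- The additive group of all `b` such that the translation by `b` lies in `H`. -/
def translations (H : Subgroup SL(2, F)) : AddSubgroup F where
  carrier := {b | translation b ∈ H}
  zero_mem' := by simp only [Set.mem_ofPred_eq, transvection_coeff_zero, one_mem]
  add_mem' ha hb := by
    simpa only [Set.mem_ofPred_eq, transvection_add] using H.mul_mem ha hb
  neg_mem' ha := by
    simpa only [Set.mem_ofPred_eq, ← transvection_inv] using H.inv_mem ha

lemma mem_translations {H : Subgroup SL(2, F)} {b : F} :
    b ∈ translations H ↔ translation b ∈ H := Iff.rfl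

lemma apply_one_one_eq_inv {M : SL(2, F)} (h : M 1 0 = 0) : M 1 1 = (M 0 0)⁻¹ := by
  have hdet := M.2
  rw [det_fin_two, h, mul_zero, sub_zero] at hdet
  exact eq_inv_of_mul_eq_one_right hdet

lemma eq_translation_iff {M : SL(2, F)} {b : F} :
    M = translation b ↔ M 1 0 = 0 ∧ M 0 0 = 1 ∧ M 0 1 = b := by
  constructor
  · rintro rfl
    simp [coe_translation]
  · rintro ⟨h10, h00, rfl⟩
    have h11 := apply_one_one_eq_inv h10
    ext i j
    fin_cases i <;> fin_cases j <;> simp [coe_translation, h10, h00, h11]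

lemma apply_zero_zero_ne_zero {M : SL(2, F)} (h : M 1 0 = 0) : M 0 0 ≠ 0 := by
  intro h00
  have hdet := M.2
  rw [det_fin_two, h, h00] at hdet
  simp at hdet

/-- The upper left entry, as a character of the subgroup of `H` fixing `∞`. -/
def diagonalChar (H : Subgroup SL(2, F)) :
    ↥(H ⊓ stabilizer SL(2, F) (∞ : OnePoint F)) →* Fˣ where
  toFun M := .mk0 (M.1 0 0) (apply_zero_zero_ne_zero (smul_infty_eq_self_iff.1 M.2.2))
  map_one' := by ext; simp
  map_mul' M N := by
    ext
    simp [mul_apply, Fin.sum_univ_two, smul_infty_eq_self_iff.1 N.2.2]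

lemma mem_ker_diagonalChar_iff {H : Subgroup SL(2, F)}
    {M : ↥(H ⊓ stabilizer SL(2, F) (∞ : OnePoint F))} :
    M ∈ (diagonalChar H).ker ↔ M.1 = translation (M.1 0 1) := by
  rw [eq_translation_iff, MonoidHom.mem_ker, Units.ext_iff]
  exact ⟨fun h ↦ ⟨smul_infty_eq_self_iff.1 M.2.2, h, rfl⟩, fun h ↦ h.2.1⟩

lemma card_ker_diagonalChar (H : Subgroup SL(2, F)) :
    Nat.card (diagonalChar H).ker = Nat.card (translations H) := by
  refine Nat.card_congr
    { toFun := fun M ↦ ⟨M.1.1 0 1, ?_⟩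
      invFun := fun b ↦ ⟨⟨translation b.1, b.2, ?_⟩, ?_⟩
      left_inv := fun M ↦ ?_
      right_inv := fun b ↦ ?_ }
  · rw [mem_translations, ← mem_ker_diagonalChar_iff.1 M.2]
    exact M.1.2.1
  · exact smul_infty_eq_self_iff.2 (by simp [coe_translation])
  · rw [mem_ker_diagonalChar_iff]
    simp [coe_translation]
  · exact Subtype.ext (Subtype.ext (mem_ker_diagonalChar_iff.1 M.2).symm)
  · exact Subtype.ext (by simp [coe_translation])

/-- The group of squares of the upper left entries of the elements of `H` fixing `∞`, that is, the
group of multipliers `a` of the affine maps `x ↦ a * x + b` in `H`. -/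
noncomputable def multipliers (H : Subgroup SL(2, F)) : Subgroup Fˣ :=
  (diagonalChar H).range.map (powMonoidHom 2)

lemma sq_mul_mem_translations {H : Subgroup SL(2, F)} {M : SL(2, F)} (hM : M ∈ H)
    (h10 : M 1 0 = 0) {b : F} (hb : b ∈ translations H) : M 0 0 ^ 2 * b ∈ translations H := by
  have hconj : translation (M 0 0 ^ 2 * b) = M * translation b * M⁻¹ := by
    have h01 : M 0 0 ^ 2 * b * (M 0 0)⁻¹ = M 0 0 * b := by field_simp
    rw [eq_mul_inv_iff_mul_eq]
    ext i j
    fin_cases i <;> fin_cases j <;>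
      simp [mul_apply, Fin.sum_univ_two, coe_translation, h10, apply_one_one_eq_inv h10, h01,
        add_comm]
  rw [mem_translations, hconj]
  exact H.mul_mem (H.mul_mem hM hb) (H.inv_mem hM)

lemma card_range_diagonalChar [NeZero (2 : F)] [Finite F] {H : Subgroup SL(2, F)}
    (hZ : Subgroup.center SL(2, F) ≤ H) :
    Nat.card (diagonalChar H).range = 2 * Nat.card (multipliers H) := by
  refine (two_mul_card_map_powMonoidHom_two ?_).symm
  have hneg : (-1 : SL(2, F)) ∈ Subgroup.center SL(2, F) :=
    mem_center_iff_eq_one_or_eq_neg_one.2 (.inr rfl)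
  refine ⟨⟨-1, hZ hneg, center_le_stabilizer _ hneg⟩, Units.ext ?_⟩
  simp [diagonalChar]

lemma card_inf_stabilizer_infty [NeZero (2 : F)] [Finite F] {H : Subgroup SL(2, F)}
    (hZ : Subgroup.center SL(2, F) ≤ H) :
    Nat.card ↥(H ⊓ stabilizer SL(2, F) (∞ : OnePoint F)) =
      2 * Nat.card (translations H) * Nat.card (multipliers H) := by
  rw [← (diagonalChar H).ker.card_mul_index, Subgroup.index_ker, card_ker_diagonalChar,
    card_range_diagonalChar hZ]
  ring

lemma two_mul_card_multipliers_dvd [NeZero (2 : F)] [Finite F] {H : Subgroup SL(2, F)}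
    (hZ : Subgroup.center SL(2, F) ≤ H) : 2 * Nat.card (multipliers H) ∣ Nat.card F - 1 := by
  rw [← card_range_diagonalChar hZ, ← Nat.card_units]
  exact Subgroup.card_subgroup_dvd_card _

lemma card_multipliers_dvd (H : Subgroup SL(2, F)) :
    Nat.card (multipliers H) ∣ Nat.card (translations H) - 1 := by
  refine card_dvd_card_sub_one ?_
  rintro _ ⟨_, ⟨M, rfl⟩, rfl⟩ b hb
  exact sq_mul_mem_translations M.2.1 (smul_infty_eq_self_iff.1 M.2.2) hb

end Borel

section ParabolicCount

variable {F : Type*} [Field F]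

lemma eq_translation_of_trace_eq_two {M : SL(2, F)} (h10 : M 1 0 = 0) (h : M.1.trace = 2) :
    M = translation (M 0 1) := by
  refine eq_translation_iff.2 ⟨h10, ?_, rfl⟩
  have h00 := apply_zero_zero_ne_zero h10
  rw [trace_fin_two, apply_one_one_eq_inv h10] at h
  field_simp at h
  refine sub_eq_zero.1 (pow_eq_zero_iff two_ne_zero |>.1 ?_)
  linear_combination h

lemma isParabolic_translation {b : F} (hb : b ≠ 0) : (translation b).1.IsParabolic := by
  rw [isParabolic_iff, transvection_mem_center_iff, discr_eq_trace_sq_sub_four, coe_translation]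
  exact ⟨hb, by norm_num [trace_fin_two]⟩

lemma isParabolic_conj {M : SL(2, F)} (hM : M.1.IsParabolic) (g : SL(2, F)) :
    (g * M * g⁻¹).1.IsParabolic := by
  have hconj := (isParabolic_conj_iff (g : GL (Fin 2) F)).2 hM
  rwa [← coe_units_inv] at hconj

lemma translation_injective : Function.Injective (translation : F → SL(2, F)) := fun a b h ↦ by
  simpa [coe_translation] using congrArg (fun M : SL(2, F) ↦ M 0 1) h

variable {K : Type*} [Field K] [Algebra F K]

lemma translation_smul_infty (b : F) : translation b • (∞ : OnePoint K) = ∞ :=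
  smul_infty_eq_self_iff.2 (by simp [coe_translation])

lemma translation_smul_coe (b : F) (x : K) :
    translation b • (x : OnePoint K) = ((x + algebraMap F K b : K) : OnePoint K) := by
  classical
  rw [← mapGL_smul, smul_some_eq_ite]
  simp [coe_translation]

lemma parabolics_inter_stabilizer_infty {H : Subgroup SL(2, F)}
    (hZ : Subgroup.center SL(2, F) ≤ H) :
    {M | M ∈ parabolics H ∧ M • (∞ : OnePoint K) = ∞} =
      translation '' (translations H \ {0}) ∪ (-translation ·) '' (translations H \ {0}) := by
  have hsub {M : SL(2, F)} (hM : M ∈ parabolics H) (hfix : M • (∞ : OnePoint K) = ∞)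
      (htrace : M.1.trace = 2) : M ∈ translation '' ((translations H : Set F) \ {0}) := by
    have hMb := eq_translation_of_trace_eq_two (smul_infty_eq_self_iff.1 hfix) htrace
    refine ⟨M 0 1, ⟨mem_translations.2 (hMb ▸ hM.1), fun h0 ↦ ?_⟩, hMb.symm⟩
    rw [Set.mem_singleton_iff.1 h0, translation, transvection_coeff_zero] at hMb
    exact (isParabolic_iff.1 hM.2).1 (hMb ▸ one_mem _)
  apply Set.Subset.antisymm
  · rintro M ⟨hM, hfix⟩
    rcases trace_eq_two_or_trace_neg_eq_two hM.2 with htrace | htrace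
    · exact .inl (hsub hM hfix htrace)
    · obtain ⟨b, hb, hMb⟩ := hsub ⟨neg_mem_of_center_le hZ hM.1, hM.2.neg⟩
        ((neg_smul _ _).trans hfix) htrace
      exact .inr ⟨b, hb, neg_eq_iff_eq_neg.2 hMb⟩
  · rintro _ (⟨b, hb, rfl⟩ | ⟨b, hb, rfl⟩)
    · exact ⟨⟨hb.1, isParabolic_translation hb.2⟩, translation_smul_infty b⟩
    · exact ⟨⟨neg_mem_of_center_le hZ hb.1, (isParabolic_translation hb.2).neg⟩,
        (neg_smul _ _).trans (translation_smul_infty b)⟩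

lemma ncard_parabolics_inter_stabilizer_infty [NeZero (2 : F)] [Finite F] {H : Subgroup SL(2, F)}
    (hZ : Subgroup.center SL(2, F) ≤ H) :
    {M | M ∈ parabolics H ∧ M • (∞ : OnePoint K) = ∞}.ncard =
      2 * (Nat.card (translations H) - 1) := by
  have hdisj : Disjoint (translation '' ((translations H : Set F) \ {0}))
      ((-translation ·) '' (translations H \ {0})) := by
    rw [Set.disjoint_left]
    rintro _ ⟨a, -, rfl⟩ ⟨b, -, hab⟩
    have h00 : (-1 : F) = 1 := by
      simpa [coe_translation] using congrArg (fun M : SL(2, F) ↦ M 0 0) hab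
    exact ringChar_ne_two (neg_one_eq_one_iff.1 h00)
  have hcard : ((translations H : Set F) \ {0}).ncard = Nat.card (translations H) - 1 := by
    rw [Set.ncard_sdiff_singleton_of_mem (translations H).zero_mem]
    rfl
  rw [parabolics_inter_stabilizer_infty hZ, Set.ncard_union_eq hdisj,
    Set.ncard_image_of_injective _ translation_injective,
    Set.ncard_image_of_injective (f := (-translation ·)) _
      (neg_injective.comp translation_injective), hcard, two_mul]

lemma existsUnique_mem_orbit_smul_eq [NeZero (2 : F)] [Finite F] [Finite K]
    {H : Subgroup SL(2, F)} (hZ : Subgroup.center SL(2, F) ≤ H) {M N : SL(2, F)}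
    (hM : M ∈ parabolics H) (hN : N ∈ parabolics H) {x : OnePoint K} (hx : M • x = x) :
    ∃! y, y ∈ orbit H x ∧ N • y = y := by
  obtain ⟨y, hy⟩ := Set.ncard_eq_one.1 (ncard_fixedBy_of_isParabolic (K := K) hN.2)
  have hfix {z : OnePoint K} : N • z = z ↔ z = y := Set.ext_iff.1 hy z
  exact ⟨y, ⟨mem_orbit_of_isParabolic hZ hM.1 hM.2 hN.1 hN.2 hx (hfix.2 rfl), hfix.2 rfl⟩,
    fun z hz ↦ hfix.1 hz.2⟩

lemma ncard_parabolics [NeZero (2 : F)] [Finite F] [Finite K] {H : Subgroup SL(2, F)}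
    (hZ : Subgroup.center SL(2, F) ≤ H) (hU : translations H ≠ ⊥) :
    (parabolics H).ncard =
      (orbit H (∞ : OnePoint K)).ncard * (2 * (Nat.card (translations H) - 1)) := by
  obtain ⟨b, hb, hb0⟩ := (translations H).bot_or_exists_ne_zero.resolve_left hU
  have hT : translation b ∈ parabolics H := ⟨hb, isParabolic_translation hb0⟩
  rw [← ncard_parabolics_inter_stabilizer_infty (K := K) hZ]
  refine ncard_eq_ncard_orbit_mul (fun h hh M hM ↦ ⟨H.mul_mem (H.mul_mem hh hM.1)
    (H.inv_mem hh), isParabolic_conj hM.2 h⟩)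
    fun M hM ↦ existsUnique_mem_orbit_smul_eq hZ hT hM (translation_smul_infty b)

lemma card_translations_lt_ncard_orbit_infty [Finite F] {H : Subgroup SL(2, F)}
    (hfix : ¬ H ≤ stabilizer SL(2, F) (∞ : OnePoint K)) :
    Nat.card (translations H) < (orbit H (∞ : OnePoint K)).ncard := by
  obtain ⟨M, hM, hMfix⟩ := Set.not_subset.1 hfix
  obtain ⟨y, hy⟩ := ne_infty_iff_exists.1 hMfix
  have hsub : insert ∞ ((fun b : F ↦ ((y + algebraMap F K b : K) : OnePoint K)) ''
      translations H) ⊆ orbit H (∞ : OnePoint K) := by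
    rintro _ (rfl | ⟨b, hb, rfl⟩)
    · exact mem_orbit_self _
    · refine ⟨⟨translation b * M, H.mul_mem hb hM⟩, ?_⟩
      exact (mul_smul _ _ _).trans (hy ▸ translation_smul_coe b y)
  have hinj : Function.Injective fun b : F ↦ ((y + algebraMap F K b : K) : OnePoint K) :=
    fun a b hab ↦ (algebraMap F K).injective (add_left_cancel (coe_injective hab))
  have : Finite (orbit H (∞ : OnePoint K)) := Set.finite_range fun h : H ↦ h • (∞ : OnePoint K)
  rw [← Nat.succ_le_iff, Nat.succ_eq_add_one]
  refine le_of_eq_of_le ?_ (Set.ncard_le_ncard hsub)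
  rw [Set.ncard_insert_of_notMem (by simp), Set.ncard_image_of_injective _ hinj]
  rfl

end ParabolicCount

/-! ### Dickson's orders -/

section Dickson

lemma exists_two_mul_mul_eq_of_mul_eq {c k n t : ℕ} (hk0 : k ≠ 0) (hk : k ≤ t + 1)
    (hn : t + 3 ≤ n) (heq : c * (2 + n * t) = (t + 2) * k * n) :
    ∃ e, (e = 1 ∨ e = 2) ∧ 2 * ((t + 2) * k) = e * (n * t + 2) ∧ e * (t + 1) ≤ 2 * k := by
  obtain ⟨e, he⟩ : ∃ e, (t + 2) * k = c * t + e := by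
    refine Nat.exists_eq_add_of_le (Nat.le_of_mul_le_mul_right (c := n) ?_ (by lia))
    rw [← heq]
    nlinarith
  have hec : n * e = 2 * c := by
    rw [he] at heq
    nlinarith
  have hmul : 2 * ((t + 2) * k) = e * (n * t + 2) := by
    rw [he, mul_add, ← mul_assoc, ← hec]
    ring
  have hle : e * (t + 1) ≤ 2 * k := by
    refine Nat.le_of_mul_le_mul_left (c := t + 2) ?_ (by lia)
    calc (t + 2) * (e * (t + 1)) = e * ((t + 3) * t + 2) := by ring
      _ ≤ e * (n * t + 2) := by gcongr
      _ = (t + 2) * (2 * k) := by rw [← hmul]; ring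
  have he2 : e ≤ 2 := Nat.le_of_mul_le_mul_right (hle.trans (by lia)) t.succ_pos
  have he0 : e ≠ 0 := by
    rintro rfl
    simp [hk0] at hmul
  exact ⟨e, by lia, hmul, hle⟩

-- For a subgroup with `h` translations and `k` multipliers, `n` is the length of the orbit of `∞`
-- and `2 + n * (h - 2)` that of the only other orbit on which the subgroup modulo `{1, -1}` is not
-- free; the equation expresses that `2 * c` is the order of a point stabilizer in that orbit.
lemma eq_or_eq_of_mul_eq {c h k n : ℕ} (hodd : Odd h) (h3 : 3 ≤ h) (hk : k ∣ h - 1)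
    (hk0 : k ≠ 0) (hn : h < n) (heq : c * (2 + n * (h - 2)) = h * k * n) :
    n = h + 1 ∧ (2 * k = h - 1 ∨ k = h - 1) ∨ h = 3 ∧ k = 2 ∧ n = 10 := by
  obtain ⟨t, rfl⟩ : ∃ t, h = t + 2 := ⟨h - 2, by lia⟩
  have hle : k ≤ t + 1 := Nat.le_of_dvd t.succ_pos hk
  have hcancel (hmul : (t + 2) * (t + 1) = n * t + 2) : n = t + 2 + 1 :=
    Nat.eq_of_mul_eq_mul_right (m := t) (by lia) (by linarith)
  obtain ⟨e, rfl | rfl, hmul, hek⟩ := exists_two_mul_mul_eq_of_mul_eq hk0 hle hn heq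
  · obtain ⟨j, hj : t + 1 = k * j⟩ := hk
    obtain rfl | rfl : j = 1 ∨ j = 2 := by
      have : j ≤ 2 := Nat.le_of_mul_le_mul_left (c := k) (by lia) (by lia)
      interval_cases j <;> lia
    · obtain rfl : k = t + 1 := by lia
      have ht : t ∣ 2 := (Nat.dvd_add_right (Dvd.intro (2 * t + 6) rfl)).1 ⟨n, by linarith⟩
      obtain rfl : t = 1 := by
        have hcop : t.Coprime 2 := Nat.coprime_two_right.2 (Nat.odd_add.1 hodd |>.2 even_two)
        exact hcop.eq_one_of_dvd ht
      lia
    · exact .inl ⟨hcancel (by rw [hj]; linarith), by lia⟩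
  · obtain rfl : k = t + 1 := by lia
    exact .inl ⟨hcancel (by linarith), by lia⟩

variable {F K : Type*} [Field F] [Field K] [Algebra F K] [NeZero (2 : F)]
  {H : Subgroup SL(2, F)}

lemma exists_card_eq_two_mul_mul_ncard_orbit (hZ : Subgroup.center SL(2, F) ≤ H)
    (x : OnePoint K) : ∃ c, Nat.card H = 2 * c * (orbit H x).ncard := by
  obtain ⟨c, hc⟩ := two_dvd_card_of_center_le (le_inf hZ (center_le_stabilizer x))
  exact ⟨c, by rw [← hc, card_inf_stabilizer_mul_ncard_orbit]⟩

lemma four_mul_ncard_orbit_le_card (hZ : Subgroup.center SL(2, F) ≤ H) {x : OnePoint K}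
    (hx : Nat.card H - 2 * (orbit H x).ncard ≠ 0) : 4 * (orbit H x).ncard ≤ Nat.card H := by
  obtain ⟨c, hc⟩ := exists_card_eq_two_mul_mul_ncard_orbit hZ x
  have hc2 : 2 ≤ c := by
    by_contra! hlt
    interval_cases c <;> lia
  rw [hc]
  gcongr
  lia

variable [Finite F]

lemma natCard_eq_two_mul_mul_mul_ncard_orbit (hZ : Subgroup.center SL(2, F) ≤ H) :
    Nat.card H = 2 * Nat.card (translations H) * Nat.card (multipliers H) *
      (orbit H (∞ : OnePoint K)).ncard := by
  have hstab : stabilizer SL(2, F) (∞ : OnePoint K) = stabilizer SL(2, F) (∞ : OnePoint F) :=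
    Subgroup.ext fun M ↦ by simp only [mem_stabilizer_iff, smul_infty_eq_self_iff]
  rw [← card_inf_stabilizer_mul_ncard_orbit H (∞ : OnePoint K), hstab,
    card_inf_stabilizer_infty hZ]

lemma three_le_card_translations (hU : translations H ≠ ⊥) : 3 ≤ Nat.card (translations H) := by
  have hodd := odd_natCard.of_dvd_nat (translations H).card_addSubgroup_dvd_card
  have hlt := (AddSubgroup.one_lt_card_iff_ne_bot _).2 hU
  obtain ⟨j, hj⟩ := hodd
  lia

variable [Finite K]

lemma exists_ncard_orbit_eq (hK : ∀ a : F, IsSquare (algebraMap F K a))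
    (hZ : Subgroup.center SL(2, F) ≤ H) (hU : translations H ≠ ⊥)
    (hfix : ¬ H ≤ stabilizer SL(2, F) (∞ : OnePoint K)) :
    ∃ x : OnePoint K, (orbit H x).ncard =
      2 + (orbit H (∞ : OnePoint K)).ncard * (Nat.card (translations H) - 2) := by
  classical
  have := Fintype.ofFinite (orbitRel.Quotient H (OnePoint K))
  have hclass := sum_card_sub_two_mul_ncard_orbit_add_ncard_parabolics hK hZ
  let ω₀ : orbitRel.Quotient H (OnePoint K) := Quotient.mk'' ∞
  have hω₀ : ω₀.orbit = orbit H ∞ := orbitRel.Quotient.orbit_mk _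
  rw [← Finset.add_sum_erase _ _ (Finset.mem_univ ω₀), hω₀, ncard_parabolics (K := K) hZ hU]
    at hclass
  have hn := card_translations_lt_ncard_orbit_infty hfix
  have hN := natCard_eq_two_mul_mul_mul_ncard_orbit (K := K) hZ
  have h3 := three_le_card_translations hU
  generalize (orbit H (∞ : OnePoint K)).ncard = n at *
  obtain ⟨t, ht⟩ : ∃ t, Nat.card (translations H) = t + 2 :=
    ⟨Nat.card (translations H) - 2, by lia⟩
  rw [ht] at hclass hn hN h3 ⊢
  have hle : 2 * (n * t) + 4 * n ≤ Nat.card H := by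
    rw [hN]
    have : 1 ≤ Nat.card (multipliers H) := Nat.card_pos
    nlinarith [Nat.zero_le (n * t)]
  have hrest : ∑ ω ∈ Finset.univ.erase ω₀, (Nat.card H - 2 * ω.orbit.ncard) =
      Nat.card H - 4 - 2 * (n * t) := by
    lia
  have hfour (ω : orbitRel.Quotient H (OnePoint K)) (hω : Nat.card H - 2 * ω.orbit.ncard ≠ 0) :
      4 * ω.orbit.ncard ≤ Nat.card H := by
    induction ω using Quotient.inductionOn' with
    | h x => exact four_mul_ncard_orbit_le_card hZ hω
  obtain ⟨ω, -, hω⟩ := exists_eq_sum_of_lt_two_mul hrest (by lia) fun ω _ hne ↦ by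
    have := hfour ω hne
    lia
  induction ω using Quotient.inductionOn' with
  | h x =>
    refine ⟨x, ?_⟩
    rw [orbitRel.Quotient.orbit_mk] at hω
    lia

lemma ncard_orbit_infty_eq_or_eq (hK : ∀ a : F, IsSquare (algebraMap F K a))
    (hZ : Subgroup.center SL(2, F) ≤ H) (hU : translations H ≠ ⊥)
    (hfix : ¬ H ≤ stabilizer SL(2, F) (∞ : OnePoint K)) :
    (orbit H (∞ : OnePoint K)).ncard = Nat.card (translations H) + 1 ∧
      (2 * Nat.card (multipliers H) = Nat.card (translations H) - 1 ∨
        Nat.card (multipliers H) = Nat.card (translations H) - 1) ∨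
    Nat.card (translations H) = 3 ∧ Nat.card (multipliers H) = 2 ∧
      (orbit H (∞ : OnePoint K)).ncard = 10 := by
  obtain ⟨x, hx⟩ := exists_ncard_orbit_eq hK hZ hU hfix
  obtain ⟨c, hc⟩ := exists_card_eq_two_mul_mul_ncard_orbit hZ x
  refine eq_or_eq_of_mul_eq (c := c)
    (odd_natCard.of_dvd_nat (translations H).card_addSubgroup_dvd_card)
    (three_le_card_translations hU) (card_multipliers_dvd H) Nat.card_pos.ne'
    (card_translations_lt_ncard_orbit_infty hfix) ?_
  rw [natCard_eq_two_mul_mul_mul_ncard_orbit (K := K) hZ, hx] at hc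
  linarith

end Dickson

section Conjugation

open scoped Pointwise in
lemma le_conj_smul_of_normal {G : Type*} [Group G] {N H : Subgroup G} [N.Normal] (h : N ≤ H)
    (g : G) : N ≤ MulAut.conj g • H := by
  rw [← Subgroup.Normal.conj_smul_eq_self g N]
  exact Subgroup.pointwise_smul_le_pointwise_smul_iff.2 h

open scoped Pointwise in
lemma exists_translations_conj_smul_ne_bot {F : Type*} [Field F] [NeZero (2 : F)]
    {H : Subgroup SL(2, F)} (hZ : Subgroup.center SL(2, F) ≤ H)
    (hpar : (parabolics H).Nonempty) :
    ∃ g : SL(2, F), translations (MulAut.conj g⁻¹ • H) ≠ ⊥ := by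
  classical
  obtain ⟨M, hM, hMpar⟩ := hpar
  obtain ⟨x, hx⟩ := Set.ncard_eq_one.1 (ncard_fixedBy_of_isParabolic (K := F) hMpar)
  have hMx : M • x = x := hx.ge rfl
  obtain ⟨g, rfl⟩ := exists_mem_SL2 F x
  have hmem : g⁻¹ * M * g⁻¹⁻¹ ∈
      {N | N ∈ parabolics (MulAut.conj g⁻¹ • H) ∧ N • (∞ : OnePoint F) = ∞} := by
    refine ⟨⟨Subgroup.smul_mem_pointwise_smul M (MulAut.conj g⁻¹) H hM,
      isParabolic_conj hMpar g⁻¹⟩, ?_⟩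
    rw [inv_inv, mul_smul, mul_smul, inv_smul_eq_iff]
    exact hMx
  rw [parabolics_inter_stabilizer_infty (le_conj_smul_of_normal hZ g⁻¹)] at hmem
  refine ⟨g, fun hbot ↦ ?_⟩
  rw [hbot] at hmem
  simp at hmem

end Conjugation

section DicksonOrder

/-- The orders that Dickson's classification allows for a proper subgroup of `SL(2, q)` containing
`-1` and a parabolic element and fixing no rational point: its image in `PSL(2, q)` is `PSL(2, h)`
or `PGL(2, h)` for a proper subfield of order `h`, or `A₅` if `h = 3`. The first two cases are
merged by recording only that the order divides that of the preimage of `PGL(2, h)`. -/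
def IsDicksonOrder (q N : ℕ) : Prop :=
  ∃ h, h ∣ q ∧ 3 ≤ h ∧ h ^ 2 ≤ q ∧ (N ∣ 2 * h * (h ^ 2 - 1) ∨ h = 3 ∧ N = 120)

lemma sq_le_of_sub_one_dvd_sub_one {h q : ℕ} (hq : h ∣ q) (hlt : h < q)
    (hdvd : h - 1 ∣ q - 1) : h ^ 2 ≤ q := by
  obtain ⟨m, rfl⟩ := hq
  obtain ⟨t, rfl⟩ : ∃ t, h = t + 1 := ⟨h - 1, by grind⟩
  have hm : 1 < m := lt_of_mul_lt_mul_left (by lia : (t + 1) * 1 < (t + 1) * m) t.succ_pos.le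
  have hsub : (t + 1) * m - 1 = t * m + (m - 1) := by lia
  rw [Nat.add_sub_cancel, hsub, Nat.dvd_add_right (Dvd.intro _ rfl)] at hdvd
  have := Nat.le_of_dvd (by lia) hdvd
  rw [pow_two]
  gcongr
  lia

variable {F : Type*} [Field F] [NeZero (2 : F)] [Finite F]

lemma natCard_SL_two :
    Nat.card SL(2, F) = (Nat.card F - 1) * Nat.card F * (Nat.card F + 1) := by
  have htop : Nat.card (⊤ : Subgroup SL(2, F)) = _ :=
    natCard_eq_two_mul_mul_mul_ncard_orbit (K := F) le_top
  have htranslations : translations (⊤ : Subgroup SL(2, F)) = ⊤ :=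
    (AddSubgroup.eq_top_iff' _).2 fun _ ↦ mem_translations.2 (Subgroup.mem_top _)
  have hrange : (diagonalChar (⊤ : Subgroup SL(2, F))).range = ⊤ := by
    refine MonoidHom.range_eq_top.2 fun u ↦ ?_
    let M : SL(2, F) := ⟨!![u, 0; 0, (u⁻¹ : Fˣ)], by simp⟩
    exact ⟨⟨M, Subgroup.mem_top _, smul_infty_eq_self_iff.2 rfl⟩, Units.ext rfl⟩
  have horbit : orbit (⊤ : Subgroup SL(2, F)) (∞ : OnePoint F) = orbit SL(2, F) ∞ :=
    Set.ext fun _ ↦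
      ⟨fun ⟨g, hg⟩ ↦ ⟨g, hg⟩, fun ⟨g, hg⟩ ↦ ⟨⟨g, Subgroup.mem_top g⟩, hg⟩⟩
  have hmultipliers := card_range_diagonalChar (F := F) le_top
  rw [hrange, Subgroup.card_top, Nat.card_units] at hmultipliers
  rw [Subgroup.card_top, htranslations, AddSubgroup.card_top, horbit, ncard_orbit_infty]
    at htop
  rw [htop, hmultipliers]
  ring

variable {K : Type*} [Field K] [Finite K] [Algebra F K] {H : Subgroup SL(2, F)}

lemma coprime_card_of_parabolics_eq_empty (hH : parabolics H = ∅) :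
    (Nat.card F).Coprime (Nat.card H) := by
  have := Fintype.ofFinite F
  obtain ⟨p, _, n, hp, hcard⟩ := FiniteField.card' F
  have : Fact p.Prime := ⟨hp⟩
  rw [Nat.card_eq_fintype_card, hcard]
  refine Nat.Coprime.pow_left _ ((hp.coprime_iff_not_dvd).2 fun hdvd ↦ ?_)
  obtain ⟨M, hM⟩ := exists_prime_orderOf_dvd_card' p hdvd
  rw [← Subgroup.orderOf_coe] at hM
  refine Set.notMem_empty M.1 (hH ▸ ⟨M.2, ?_⟩)
  refine isParabolic_of_pow_char_eq_one (hM ▸ pow_orderOf_eq_one _) ?_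
  rw [Ne, ← orderOf_eq_one_iff, hM]
  exact hp.ne_one

lemma card_translations_lt_card (hK : ∀ a : F, IsSquare (algebraMap F K a))
    (hZ : Subgroup.center SL(2, F) ≤ H) (htop : H ≠ ⊤) (hU : translations H ≠ ⊥)
    (hfix : ¬ H ≤ stabilizer SL(2, F) (∞ : OnePoint K)) :
    Nat.card (translations H) < Nat.card F := by
  refine lt_of_le_of_ne (Nat.le_of_dvd Nat.card_pos
    (translations H).card_addSubgroup_dvd_card) fun heq ↦ htop ?_
  have hmultipliers := Nat.le_of_dvd (Nat.sub_pos_of_lt Finite.one_lt_card)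
    (two_mul_card_multipliers_dvd hZ)
  obtain ⟨hn, hk⟩ | ⟨h3', hk, -⟩ := ncard_orbit_infty_eq_or_eq hK hZ hU hfix
  · refine Subgroup.eq_top_of_card_eq H ?_
    have hk' : 2 * Nat.card (multipliers H) = Nat.card F - 1 := by lia
    rw [natCard_eq_two_mul_mul_mul_ncard_orbit (K := K) hZ, natCard_SL_two, hn, heq, ← hk']
    ring
  · lia

lemma isDicksonOrder_card_of_translations_ne_bot (hK : ∀ a : F, IsSquare (algebraMap F K a))
    (hZ : Subgroup.center SL(2, F) ≤ H) (htop : H ≠ ⊤) (hU : translations H ≠ ⊥)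
    (hfix : ¬ H ≤ stabilizer SL(2, F) (∞ : OnePoint K)) :
    IsDicksonOrder (Nat.card F) (Nat.card H) := by
  have h2k := two_mul_card_multipliers_dvd hZ
  have hN := natCard_eq_two_mul_mul_mul_ncard_orbit (K := K) hZ
  have hdvd := (translations H).card_addSubgroup_dvd_card
  have hlt := card_translations_lt_card hK hZ htop hU hfix
  have hsq : Nat.card (translations H) ^ 2 - 1 = _ := Nat.sq_sub_sq _ 1
  refine ⟨Nat.card (translations H), hdvd, three_le_card_translations hU,
    sq_le_of_sub_one_dvd_sub_one hdvd hlt ?_, ?_⟩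
  all_goals obtain ⟨hn, hk | hk⟩ | ⟨h3, hk, hn⟩ := ncard_orbit_infty_eq_or_eq hK hZ hU hfix
  · exact hk ▸ h2k
  · exact hk ▸ dvd_of_mul_left_dvd h2k
  · simpa [h3] using dvd_of_mul_right_dvd (hk ▸ h2k)
  · exact .inl ⟨2, by rw [hN, hsq, hn, ← hk]; ring⟩
  · exact .inl ⟨1, by rw [hN, hsq, hn, hk]; ring⟩
  · exact .inr ⟨h3, by rw [hN, h3, hk, hn]⟩

open scoped Pointwise in
theorem isDicksonOrder_card (hK : ∀ a : F, IsSquare (algebraMap F K a))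
    (hZ : Subgroup.center SL(2, F) ≤ H) (htop : H ≠ ⊤) (hpar : (parabolics H).Nonempty)
    (hfix : ∀ x ∈ orbit SL(2, F) (∞ : OnePoint K), ¬ H ≤ stabilizer SL(2, F) x) :
    IsDicksonOrder (Nat.card F) (Nat.card H) := by
  obtain ⟨g, hg⟩ := exists_translations_conj_smul_ne_bot hZ hpar
  rw [Nat.card_congr (Subgroup.equivSMul (MulAut.conj g⁻¹) H).toEquiv]
  refine isDicksonOrder_card_of_translations_ne_bot hK (le_conj_smul_of_normal hZ g⁻¹) ?_ hg ?_
  · rwa [← Subgroup.Normal.conj_smul_eq_self g⁻¹ ⊤, Ne, smul_left_cancel_iff]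
  · intro hle
    refine hfix _ (mem_orbit ∞ g) ?_
    rw [stabilizer_smul_eq_stabilizer_map_conj]
    rwa [map_inv, Subgroup.pointwise_smul_subset_iff, inv_inv] at hle

end DicksonOrder

section DicksonArithmetic

lemma coprime_of_isPrimePow_of_dvd {q h m : ℕ} (hq : IsPrimePow q) (hh : h ∣ q) (h1 : h ≠ 1)
    (hm : h.Coprime m) : q.Coprime m := by
  obtain ⟨p, n, hp, -, rfl⟩ := hq
  obtain ⟨i, -, rfl⟩ := (Nat.dvd_prime_pow hp.nat_prime).1 hh
  have hi : i ≠ 0 := by rintro rfl; exact h1 (pow_zero p)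
  exact Nat.Coprime.pow_left n ((Nat.coprime_pow_left_iff (Nat.pos_of_ne_zero hi) p m).1 hm)

namespace IsDicksonOrder

variable {q M N : ℕ}

lemma exists_dvd_mul_of_coprime (hN : IsDicksonOrder q N) (hq : IsPrimePow q) (hodd : Odd q) :
    ∃ h c, N ∣ h * c ∧ q.Coprime c ∧ 3 ≤ h ∧ h ^ 2 ≤ q ∧ (h = 3 ∨ c = 2 * (h ^ 2 - 1)) := by
  obtain ⟨h, hhq, h3, hle, hdvd | ⟨rfl, rfl⟩⟩ := hN
  · have hcop : h.Coprime (h ^ 2 - 1) := by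
      refine Nat.Coprime.coprime_dvd_left (dvd_pow_self h two_ne_zero) ?_
      exact (Nat.coprime_self_sub_right (Nat.one_le_pow _ _ (by lia))).2 (Nat.coprime_one_right _)
    refine ⟨h, 2 * (h ^ 2 - 1), hdvd.trans (dvd_of_eq (by ring)), ?_, h3, hle, .inr rfl⟩
    exact (Nat.coprime_two_right.2 hodd).mul_right
      (coprime_of_isPrimePow_of_dvd hq hhq (by lia) hcop)
  · exact ⟨3, 40, dvd_rfl, coprime_of_isPrimePow_of_dvd hq hhq (by lia) (by norm_num), le_rfl,
      hle, .inl rfl⟩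

lemma not_dvd (hN : IsDicksonOrder q N) (hq : IsPrimePow q) (hodd : Odd q) : ¬ q ∣ N := by
  obtain ⟨h, c, hdvd, hcop, h3, hle, -⟩ := hN.exists_dvd_mul_of_coprime hq hodd
  intro hqN
  have := Nat.le_of_dvd (by lia) (hcop.dvd_of_dvd_mul_right (hqN.trans hdvd))
  nlinarith

-- Comparing the parts not coprime to `q` gives `q ∣ h * k`, where `h ^ 2 ≤ q` and `k ^ 2 ≤ q`.
-- This leaves `h = k` and `q = h ^ 2`.
lemma not_mul_dvd_mul (hM : IsDicksonOrder q M) (hN : IsDicksonOrder q N) (hq : IsPrimePow q)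
    (hodd : Odd q) (h9 : q ≠ 9) : ¬ (q - 1) * q * (q + 1) ∣ M * N := by
  obtain ⟨h, c, hMdvd, hc, h3, hle, hhc⟩ := hM.exists_dvd_mul_of_coprime hq hodd
  obtain ⟨k, d, hNdvd, hd, k3, kle, hkd⟩ := hN.exists_dvd_mul_of_coprime hq hodd
  intro hdvd
  replace hdvd : (q - 1) * q * (q + 1) ∣ (h * k) * (c * d) :=
    (hdvd.trans (mul_dvd_mul hMdvd hNdvd)).trans (dvd_of_eq (by ring))
  have hqhk : q ∣ h * k := (hc.mul_right hd).dvd_of_dvd_mul_right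
    ((Dvd.intro_left (q - 1) rfl).trans (dvd_of_mul_right_dvd hdvd))
  have hqle := Nat.le_of_dvd (by positivity) hqhk
  obtain rfl : h = k := by
    rcases lt_trichotomy h k with hlt | heq | hlt
    · nlinarith
    · exact heq
    · nlinarith
  obtain rfl : q = h ^ 2 := by lia
  have hne : h ≠ 3 := by rintro rfl; exact h9 rfl
  rw [hhc.resolve_left hne, hkd.resolve_left hne] at hdvd
  obtain ⟨m, hm⟩ : ∃ m, h ^ 2 = m + 1 :=
    ⟨h ^ 2 - 1, by have : 1 ≤ h ^ 2 := Nat.one_le_pow _ _ (by lia); lia⟩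
  have hcancel : (m * (m + 1)) * (m + 2) ∣ (m * (m + 1)) * (4 * m) := by
    rw [hm, Nat.add_sub_cancel] at hdvd
    refine hdvd.trans (dvd_of_eq ?_)
    linear_combination 4 * m ^ 2 * hm
  have hdvd_four : m + 2 ∣ 4 * m := Nat.dvd_of_mul_dvd_mul_left (by nlinarith) hcancel
  have hdvd_eight : m + 2 ∣ 8 :=
    (Nat.dvd_add_right hdvd_four).1 ((dvd_mul_left (m + 2) 4).trans (dvd_of_eq (by ring)))
  have := Nat.le_of_dvd (by norm_num) hdvd_eight
  nlinarith

lemma not_succ_dvd (hN : IsDicksonOrder q N) (hmod : q % 4 = 1) (h9 : q ≠ 9) :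
    ¬ q + 1 ∣ N := by
  obtain ⟨h, hhq, h3, hle, hdvd | ⟨rfl, rfl⟩⟩ := hN
  · intro hqN
    have hcop : (q + 1).Coprime h :=
      Nat.Coprime.coprime_dvd_right hhq (by simp)
    obtain ⟨j, hj⟩ : q + 1 ∣ 2 * (h ^ 2 - 1) :=
      hcop.dvd_of_dvd_mul_left ((hqN.trans hdvd).trans (dvd_of_eq (by ring)))
    have h3' : 3 * 3 ≤ h ^ 2 := by rw [sq]; exact Nat.mul_le_mul h3 h3
    obtain rfl : j = 1 := by
      have : j < 2 := by by_contra! hj2; nlinarith [Nat.sub_le (h ^ 2) 1]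
      have : j ≠ 0 := by rintro rfl; lia
      lia
    have hq3 : q + 3 = 2 * h ^ 2 := by lia
    have hdvd_three : h ∣ 3 := (Nat.dvd_add_right hhq).1
      (hq3 ▸ (dvd_pow_self h two_ne_zero).mul_left 2)
    obtain rfl : h = 3 := le_antisymm (Nat.le_of_dvd three_pos hdvd_three) h3
    lia
  · intro hqN
    have hq_le : q ≤ 119 := Nat.le_of_lt_succ (Nat.le_of_dvd (by norm_num) hqN)
    interval_cases q <;> lia

end IsDicksonOrder

end DicksonArithmetic

/-! ### Subgroups without parabolic elements -/

section SquareNegOne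

variable {F K : Type*} [Field F] [Field K] [Algebra F K] {M : SL(2, F)}

lemma trace_eq_zero_of_sq_eq_neg_one (hM : M ^ 2 = -1) : M.1.trace = 0 := by
  have hinv : M⁻¹ = -M := inv_eq_of_mul_eq_one_right (by rw [mul_neg, ← sq, hM, neg_neg])
  have h00 := congrArg (fun N : SL(2, F) ↦ N 0 0) hinv
  simp only [SL2_inv_expl, coe_neg, Matrix.neg_apply] at h00
  rw [trace_fin_two]
  simpa [eq_neg_iff_add_eq_zero, add_comm] using h00

lemma isSquare_discr_of_sq_eq_neg_one (hi : IsSquare (-1 : F)) (hM : M ^ 2 = -1) :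
    IsSquare M.1.discr := by
  obtain ⟨i, hi⟩ := hi
  refine ⟨2 * i, ?_⟩
  rw [discr_eq_trace_sq_sub_four, trace_eq_zero_of_sq_eq_neg_one hM]
  linear_combination 4 * hi

variable [NeZero (2 : F)]

lemma sq_eq_one_iff_mem_center : M ^ 2 = 1 ↔ M ∈ Subgroup.center SL(2, F) := by
  constructor
  · intro hM
    have hinv : M⁻¹ = M := inv_eq_of_mul_eq_one_right (by rw [← sq, hM])
    have hentry (i j : Fin 2) : M⁻¹ i j = M i j := by rw [hinv]
    rw [SL2_inv_expl] at hentry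
    rw [← mem_range_scalar_iff_mem_center, mem_range_scalar_fin_two_iff]
    have := ringChar_ne_two (R := F)
    exact ⟨(Ring.eq_self_iff_eq_zero_of_char_ne_two this).1 (hentry 0 1),
      (Ring.eq_self_iff_eq_zero_of_char_ne_two this).1 (hentry 1 0), hentry 1 1⟩
  · rw [mem_center_iff_eq_one_or_eq_neg_one]
    rintro (rfl | rfl)
    · exact one_pow 2
    · exact neg_one_sq

lemma notMem_center_of_sq_eq_neg_one (hM : M ^ 2 = -1) : M ∉ Subgroup.center SL(2, F) := by
  rw [← sq_eq_one_iff_mem_center, hM]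
  exact one_ne_neg_one.symm

lemma orderOf_eq_four_of_sq_eq_neg_one (hM : M ^ 2 = -1) : orderOf M = 4 := by
  refine orderOf_eq_prime_pow (p := 2) (n := 1) ?_ ?_
  · rw [pow_one, sq_eq_one_iff_mem_center]
    exact notMem_center_of_sq_eq_neg_one hM
  · rw [pow_add, pow_mul, pow_one, hM, neg_one_sq]

lemma exists_sq_eq_neg_one_of_four_dvd_card [Finite F] {H : Subgroup SL(2, F)}
    (h4 : 4 ∣ Nat.card H) : ∃ M ∈ H, M ^ 2 = -1 := by
  obtain ⟨P, hP⟩ := Sylow.exists_subgroup_card_pow_prime 2 (n := 2) h4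
  have hP4 : Nat.card (P.map H.subtype) = 4 := by
    rw [← Nat.card_congr (P.equivMapOfInjective _ H.subtype_injective).toEquiv, hP]
    norm_num
  obtain ⟨M, hMP, hM⟩ : ∃ M ∈ P.map H.subtype, M ∉ Subgroup.center SL(2, F) := by
    by_contra! hle
    have := Subgroup.card_le_of_le hle
    rw [hP4, card_center] at this
    norm_num at this
  have hsq : (M ^ 2) ^ 2 = 1 := by
    rw [← pow_mul, ← orderOf_dvd_iff_pow_eq_one]
    exact (Subgroup.orderOf_dvd_natCard _ hMP).trans (dvd_of_eq hP4)
  rw [sq_eq_one_iff_mem_center, mem_center_iff_eq_one_or_eq_neg_one] at hsq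
  exact ⟨M, Subgroup.map_subtype_le P hMP, hsq.resolve_left (mt sq_eq_one_iff_mem_center.1 hM)⟩

lemma mem_orbit_infty_of_four_dvd_card [Finite F] (hi : IsSquare (-1 : F))
    {H : Subgroup SL(2, F)} {x : OnePoint K}
    (h4 : 4 ∣ Nat.card ↥(H ⊓ stabilizer SL(2, F) x)) : x ∈ orbit SL(2, F) (∞ : OnePoint K) := by
  obtain ⟨M, ⟨-, hMx⟩, hM⟩ := exists_sq_eq_neg_one_of_four_dvd_card h4
  exact fixedBy_subset_orbit_infty (notMem_center_of_sq_eq_neg_one hM)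
    (isSquare_discr_of_sq_eq_neg_one hi hM) hMx

lemma four_dvd_card_inf_stabilizer_infty [Finite F] [Finite K] (hi : IsSquare (-1 : F))
    {H : Subgroup SL(2, F)} (hZ : Subgroup.center SL(2, F) ≤ H)
    (hH : orbit H (∞ : OnePoint K) = orbit SL(2, F) ∞) :
    4 ∣ Nat.card ↥(H ⊓ stabilizer SL(2, F) (∞ : OnePoint K)) := by
  have h4 : 4 ∣ Nat.card H := by
    rw [← card_inf_stabilizer_mul_ncard_orbit H (∞ : OnePoint K), hH, ncard_orbit_infty]
    exact mul_dvd_mul (two_dvd_card_of_center_le (le_inf hZ (center_le_stabilizer _)))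
      odd_natCard.add_one.two_dvd
  obtain ⟨M, hMH, hM⟩ := exists_sq_eq_neg_one_of_four_dvd_card h4
  have hcenter := notMem_center_of_sq_eq_neg_one hM
  have hsq := isSquare_discr_of_sq_eq_neg_one hi hM
  obtain ⟨x, hx⟩ : (fixedBy (OnePoint K) M).Nonempty :=
    Set.nonempty_of_ncard_ne_zero (ncard_fixedBy_ne_zero hcenter (hsq.map _))
  have horbit : orbit H x = orbit H (∞ : OnePoint K) :=
    orbit_eq_iff.2 (hH ▸ fixedBy_subset_orbit_infty hcenter hsq hx)
  have hcard : Nat.card ↥(H ⊓ stabilizer SL(2, F) x) =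
      Nat.card ↥(H ⊓ stabilizer SL(2, F) (∞ : OnePoint K)) := by
    refine Nat.eq_of_mul_eq_mul_right (m := (orbit H x).ncard) ?_ ?_
    · exact (Set.ncard_pos).2 (nonempty_orbit x)
    · rw [card_inf_stabilizer_mul_ncard_orbit, horbit, card_inf_stabilizer_mul_ncard_orbit]
  rw [← hcard, ← orderOf_eq_four_of_sq_eq_neg_one hM]
  exact Subgroup.orderOf_dvd_natCard _ ⟨hMH, hx⟩

end SquareNegOne

section RegularCase

lemma eq_five_or_eq_twenty_nine_of_six_mul_eq {q m₁ m₂ s₂ : ℕ} (h₁ : 6 * m₁ = 4 * (q + 1))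
    (h₂ : s₂ * m₂ = 4 * (q + 1)) (hs₂ : 6 ≤ s₂) (hmod : s₂ % 4 = 2) (hsum : q + 3 = m₁ + m₂) :
    q = 5 ∨ q = 29 := by
  have hlt : s₂ < 12 := by
    by_contra! hle
    have := Nat.mul_le_mul_right m₂ hle
    lia
  obtain rfl | rfl : s₂ = 6 ∨ s₂ = 10 := by lia
  · exact .inl (by lia)
  · exact .inr (by lia)

-- Here `s` is the order of a stabilizer in the orbit of the `q + 1` rational points, `s₁` and `s₂`
-- are those for the two remaining orbits (of lengths `m₁` and `m₂`) that are not free modulo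
-- `{1, -1}`, and `hsum` is the class equation.
lemma eq_five_or_eq_twenty_nine {q s m₁ s₁ m₂ s₂ : ℕ} (hs : 4 ∣ s) (hs0 : s ≠ 0)
    (h₁ : s₁ * m₁ = s * (q + 1)) (h₂ : s₂ * m₂ = s * (q + 1)) (hs₁ : 6 ≤ s₁) (hs₂ : 6 ≤ s₂)
    (hmod₁ : s₁ % 4 = 2) (hmod₂ : s₂ % 4 = 2)
    (hsum : s * (q + 1) + 4 = 2 * m₁ + 2 * m₂ + 2 * (q + 1)) : q = 5 ∨ q = 29 := by
  have hm₁ := Nat.mul_le_mul_right m₁ hs₁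
  have hm₂ := Nat.mul_le_mul_right m₂ hs₂
  obtain rfl : s = 4 := by
    obtain ⟨t, rfl⟩ := hs
    obtain rfl : t = 1 := by
      have : t < 2 := by by_contra! ht; nlinarith
      lia
    rfl
  by_cases h6₁ : s₁ = 6
  · exact eq_five_or_eq_twenty_nine_of_six_mul_eq (h6₁ ▸ h₁) h₂ hs₂ hmod₂ (by lia)
  by_cases h6₂ : s₂ = 6
  · exact eq_five_or_eq_twenty_nine_of_six_mul_eq (h6₂ ▸ h₂) h₁ hs₁ hmod₁ (by lia)
  have hten₁ := Nat.mul_le_mul_right m₁ (show 10 ≤ s₁ by lia)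
  have hten₂ := Nat.mul_le_mul_right m₂ (show 10 ≤ s₂ by lia)
  lia

variable {F K : Type*} [Field F] [Finite F] [Field K] [Algebra F K] [NeZero (2 : F)]
  {H : Subgroup SL(2, F)}

lemma card_inf_stabilizer_mod_four (hi : IsSquare (-1 : F)) (hZ : Subgroup.center SL(2, F) ≤ H)
    {x : OnePoint K} (hx : x ∉ orbit SL(2, F) ∞) :
    Nat.card ↥(H ⊓ stabilizer SL(2, F) x) % 4 = 2 := by
  have h2 := two_dvd_card_of_center_le (le_inf hZ (center_le_stabilizer x))
  have h4 := mt (mem_orbit_infty_of_four_dvd_card (H := H) hi) hx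
  lia

lemma six_le_card_inf_stabilizer (hi : IsSquare (-1 : F)) (hZ : Subgroup.center SL(2, F) ≤ H)
    {x : OnePoint K} (hx : x ∉ orbit SL(2, F) ∞) (h0 : Nat.card H - 2 * (orbit H x).ncard ≠ 0) :
    6 ≤ Nat.card ↥(H ⊓ stabilizer SL(2, F) x) := by
  have hmod := card_inf_stabilizer_mod_four hi hZ hx
  have hne : Nat.card ↥(H ⊓ stabilizer SL(2, F) x) ≠ 2 := fun h ↦
    h0 (by rw [← card_inf_stabilizer_mul_ncard_orbit H x, h, Nat.sub_self])
  lia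

variable [Finite K]

lemma exists_ncard_orbit_add_ncard_orbit (hK : ∀ a : F, IsSquare (algebraMap F K a))
    (hi : IsSquare (-1 : F)) (hZ : Subgroup.center SL(2, F) ≤ H)
    (hH : orbit H (∞ : OnePoint K) = orbit SL(2, F) ∞) (hpar : parabolics H = ∅)
    (hN : 4 * (Nat.card F + 1) ≤ Nat.card H) :
    ∃ x y : OnePoint K, x ∉ orbit SL(2, F) ∞ ∧ y ∉ orbit SL(2, F) ∞ ∧
      Nat.card H - 2 * (orbit H x).ncard ≠ 0 ∧ Nat.card H - 2 * (orbit H y).ncard ≠ 0 ∧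
      Nat.card H + 4 = 2 * (orbit H x).ncard + 2 * (orbit H y).ncard + 2 * (Nat.card F + 1) := by
  classical
  have := Fintype.ofFinite (orbitRel.Quotient H (OnePoint K))
  let ω₀ : orbitRel.Quotient H (OnePoint K) := Quotient.mk'' ∞
  have hω₀ : ω₀.orbit.ncard = Nat.card F + 1 := by
    rw [← ncard_orbit_infty (K := K), ← hH]
    exact congrArg Set.ncard (orbitRel.Quotient.orbit_mk _)
  have hF := Finite.one_lt_card (α := F)
  have hsum := sum_card_sub_two_mul_ncard_orbit_add_ncard_parabolics hK hZ
  rw [hpar, Set.ncard_empty, add_zero, ← Finset.add_sum_erase _ _ (Finset.mem_univ ω₀),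
    hω₀] at hsum
  have hnotMem {x : OnePoint K} (hx : Quotient.mk'' x ∈ Finset.univ.erase ω₀) :
      x ∉ orbit SL(2, F) ∞ := fun hmem ↦
    Finset.ne_of_mem_erase hx (Quotient.sound' (hH.symm ▸ hmem : x ∈ orbit H ∞))
  have hlarge : ∀ ω ∈ Finset.univ.erase ω₀, Nat.card H - 2 * ω.orbit.ncard ≠ 0 →
      6 * ω.orbit.ncard ≤ Nat.card H := by
    intro ω hω h0
    induction ω using Quotient.inductionOn' with | h x
    rw [orbitRel.Quotient.orbit_mk] at h0 ⊢
    rw [← card_inf_stabilizer_mul_ncard_orbit H x]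
    exact Nat.mul_le_mul_right _ (six_le_card_inf_stabilizer hi hZ (hnotMem hω) h0)
  obtain ⟨ω₁, hω₁, ω₂, hω₂, h0₁, h0₂, hadd⟩ := exists_add_eq_sum_of_lt_three_mul
    (s := Finset.univ.erase ω₀) (c := fun ω ↦ Nat.card H - 2 * ω.orbit.ncard)
    (R := Nat.card H + 2 * (Nat.card F + 1) - 4) (by lia) (by lia)
    fun ω hω h0 ↦ by have := hlarge ω hω h0; lia
  induction ω₁ using Quotient.inductionOn' with | h x
  induction ω₂ using Quotient.inductionOn' with | h y
  rw [orbitRel.Quotient.orbit_mk] at h0₁ h0₂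
  rw [orbitRel.Quotient.orbit_mk, orbitRel.Quotient.orbit_mk] at hadd
  exact ⟨x, y, hnotMem hω₁, hnotMem hω₂, h0₁, h0₂, by lia⟩

theorem natCard_eq_five_or_eq_twenty_nine (hK : ∀ a : F, IsSquare (algebraMap F K a))
    (hi : IsSquare (-1 : F)) (hZ : Subgroup.center SL(2, F) ≤ H)
    (hH : orbit H (∞ : OnePoint K) = orbit SL(2, F) ∞) (hpar : parabolics H = ∅) :
    Nat.card F = 5 ∨ Nat.card F = 29 := by
  have hcard := card_inf_stabilizer_mul_ncard_orbit H (∞ : OnePoint K)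
  rw [hH, ncard_orbit_infty] at hcard
  have hs := four_dvd_card_inf_stabilizer_infty hi hZ hH
  have hN : 4 * (Nat.card F + 1) ≤ Nat.card H := by
    rw [← hcard]
    exact Nat.mul_le_mul_right _ (Nat.le_of_dvd Nat.card_pos hs)
  obtain ⟨x, y, hx, hy, hx0, hy0, hsum⟩ :=
    exists_ncard_orbit_add_ncard_orbit hK hi hZ hH hpar hN
  have hcardOrbit (z : OnePoint K) := card_inf_stabilizer_mul_ncard_orbit H z
  rw [← hcard] at hcardOrbit hsum
  exact eq_five_or_eq_twenty_nine hs Nat.card_pos.ne' (hcardOrbit x) (hcardOrbit y)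
    (six_le_card_inf_stabilizer hi hZ hx hx0) (six_le_card_inf_stabilizer hi hZ hy hy0)
    (card_inf_stabilizer_mod_four hi hZ hx) (card_inf_stabilizer_mod_four hi hZ hy) hsum

end RegularCase

/-! ### Factorizations -/

section ProperFactorization

lemma neZero_two_of_odd_natCard {F : Type*} [Field F] [Finite F] (hodd : Odd (Nat.card F)) :
    NeZero (2 : F) := by
  have := Fintype.ofFinite F
  refine ⟨Ring.two_ne_zero fun hchar ↦ ?_⟩
  rw [FiniteField.even_card_iff_char_two, ← Nat.card_eq_fintype_card] at hchar
  exact Nat.not_even_iff_odd.2 hodd (Nat.even_iff.2 hchar)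

lemma isPrimePow_natCard {F : Type*} [Field F] [Finite F] : IsPrimePow (Nat.card F) := by
  have := Fintype.ofFinite F
  exact Nat.card_eq_fintype_card (α := F) ▸ FiniteField.isPrimePow_card F

variable {F K : Type*} [Field F] [Finite F] [Field K] [Algebra F K] {A B : Subgroup SL(2, F)}

lemma not_le_stabilizer_of_orbit_eq {x : OnePoint K}
    (hB : orbit B (∞ : OnePoint K) = orbit SL(2, F) ∞) (hx : x ∈ orbit SL(2, F) ∞) :
    ¬ B ≤ stabilizer SL(2, F) x := by
  intro hle
  have horbit : orbit B x = {x} := Set.eq_singleton_iff_unique_mem.2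
    ⟨mem_orbit_self x, by rintro _ ⟨b, rfl⟩; exact hle b.2⟩
  have hcard := congrArg Set.ncard (horbit.symm.trans (orbit_eq_iff.2 (hB ▸ hx)))
  rw [Set.ncard_singleton, hB, ncard_orbit_infty] at hcard
  exact Nat.card_pos.ne' (Nat.succ_injective hcard).symm

variable [NeZero (2 : F)]

lemma parabolics_nonempty_of_card_dvd [Finite K] (hK : ∀ a : F, IsSquare (algebraMap F K a))
    (hZ : Subgroup.center SL(2, F) ≤ B) (hB : B ≠ ⊤)
    (hfix : ∀ x ∈ orbit SL(2, F) (∞ : OnePoint K), ¬ B ≤ stabilizer SL(2, F) x)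
    (hdvd : Nat.card F ∣ Nat.card A * Nat.card B) : (parabolics A).Nonempty := by
  by_contra! hA
  have hdvdB := (coprime_card_of_parabolics_eq_empty hA).dvd_of_dvd_mul_left hdvd
  have hBpar : (parabolics B).Nonempty := by
    by_contra! hempty
    have := Nat.Coprime.eq_one_of_dvd (coprime_card_of_parabolics_eq_empty hempty) hdvdB
    exact Finite.one_lt_card.ne' this
  exact (isDicksonOrder_card hK hZ hB hBpar hfix).not_dvd isPrimePow_natCard odd_natCard hdvdB

variable [Finite K]

lemma not_le_stabilizer_of_factorization (hmod : Nat.card F % 4 = 1)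
    (hexc : Nat.card F ≠ 5 ∧ Nat.card F ≠ 9 ∧ Nat.card F ≠ 29)
    (hK : ∀ a : F, IsSquare (algebraMap F K a)) (hZ : Subgroup.center SL(2, F) ≤ B) (hB : B ≠ ⊤)
    (hAB : ∀ g, ∃ a ∈ A, ∃ b ∈ B, g = a * b) :
    ∀ x ∈ orbit SL(2, F) (∞ : OnePoint K), ¬ A ≤ stabilizer SL(2, F) x := by
  intro x hx hA
  have horbitx : orbit B x = orbit SL(2, F) ∞ :=
    (orbit_eq_orbit_of_factorization hAB hA).trans (orbit_eq_iff.2 hx)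
  have horbit : orbit B (∞ : OnePoint K) = orbit SL(2, F) ∞ := by
    rw [← horbitx, orbit_eq_iff, horbitx]
    exact mem_orbit_self _
  obtain hempty | hpar := (parabolics B).eq_empty_or_nonempty
  · have hi : IsSquare (-1 : F) := by
      have := Fintype.ofFinite F
      rw [FiniteField.isSquare_neg_one_iff, ← Nat.card_eq_fintype_card, hmod]
      norm_num
    exact (natCard_eq_five_or_eq_twenty_nine hK hi hZ horbit hempty).elim hexc.1 hexc.2.2
  · have hdickson := isDicksonOrder_card hK hZ hB hpar fun y ↦ not_le_stabilizer_of_orbit_eq horbit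
    refine hdickson.not_succ_dvd hmod hexc.2.1 ?_
    rw [← ncard_orbit_infty (K := K), ← horbit]
    exact Dvd.intro_left _ (card_inf_stabilizer_mul_ncard_orbit B ∞)

theorem not_factorization_of_center_le (hmod : Nat.card F % 4 = 1)
    (hexc : Nat.card F ≠ 5 ∧ Nat.card F ≠ 9 ∧ Nat.card F ≠ 29)
    (hZA : Subgroup.center SL(2, F) ≤ A) (hZB : Subgroup.center SL(2, F) ≤ B) (hA : A ≠ ⊤)
    (hB : B ≠ ⊤) : ¬ ∀ g, ∃ a ∈ A, ∃ b ∈ B, g = a * b := by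
  intro hAB
  obtain ⟨p, _⟩ := CharP.exists F
  have : Fact p.Prime := ⟨CharP.char_is_prime F p⟩
  have hK := isSquare_algebraMap_of_card_eq_sq (FiniteField.natCard_extension F p 2)
  have hfixA := not_le_stabilizer_of_factorization hmod hexc hK hZB hB hAB
  have hfixB := not_le_stabilizer_of_factorization hmod hexc hK hZA hA (factorization_symm hAB)
  have hdvd := natCard_SL_two (F := F) ▸ card_dvd_card_mul_card_of_factorization hAB
  have hdvdF : Nat.card F ∣ Nat.card A * Nat.card B :=
    (Dvd.intro_left (Nat.card F - 1) rfl).trans (dvd_of_mul_right_dvd hdvd)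
  have hparA := parabolics_nonempty_of_card_dvd hK hZB hB hfixB hdvdF
  have hparB := parabolics_nonempty_of_card_dvd hK hZA hA hfixA
    (hdvdF.trans (dvd_of_eq (mul_comm _ _)))
  exact (isDicksonOrder_card hK hZA hA hparA hfixA).not_mul_dvd_mul
    (isDicksonOrder_card hK hZB hB hparB hfixB) isPrimePow_natCard odd_natCard hexc.2.1 hdvd

end ProperFactorization

end SLTwo

/-- for a prime power `q ≥ 4` with `q ≡ 1 (mod 4)` and `q ∉ {5, 9, 29}`, the
group `PSL(2,q)` has no factorization `PSL(2,q) = AB` with both `A` and `B` proper subgroups. -/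
theorem stmt_10 (F : Type*) [Field F] [Fintype F] (q : ℕ) (hq : Fintype.card F = q)
    (hq4 : 4 ≤ q) (hmod : q % 4 = 1) (hexc : q ≠ 5 ∧ q ≠ 9 ∧ q ≠ 29) :
    ¬ ∃ A B : Subgroup (Matrix.ProjectiveSpecialLinearGroup (Fin 2) F),
        A ≠ ⊤ ∧ B ≠ ⊤ ∧ ∀ g, ∃ a ∈ A, ∃ b ∈ B, g = a * b := by
  rintro ⟨A, B, hA, hB, hAB⟩
  rw [← Nat.card_eq_fintype_card] at hq
  subst hq
  have : NeZero (2 : F) := SLTwo.neZero_two_of_odd_natCard (Nat.odd_iff.2 (by lia))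
  let π : SL(2, F) →* Matrix.ProjectiveSpecialLinearGroup (Fin 2) F := QuotientGroup.mk' _
  have hπ : Function.Surjective π := QuotientGroup.mk'_surjective _
  have hcenter (C : Subgroup _) : Subgroup.center SL(2, F) ≤ C.comap π :=
    (QuotientGroup.ker_mk' _).ge.trans (Subgroup.ker_le_comap π C)
  have hproper {C : Subgroup _} (hC : C ≠ ⊤) : C.comap π ≠ ⊤ :=
    Subgroup.comap_top π ▸ (Subgroup.comap_injective hπ).ne hC
  exact SLTwo.not_factorization_of_center_le hmod hexc (hcenter A) (hcenter B) (hproper hA)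
    (hproper hB) (SLTwo.factorization_comap hπ hAB)
end

section
/- Let q be a prime power with q ≢ 1 (mod 4). Then PSL(2,q) = AB where A is a maximal parabolic subgroup (a point stabilizer in the action on the projective line, of order q(q−1)/gcd(2,q−1)) and B is dihedral of order 2(q+1) if q is even, and of order q+1 if q is odd; moreover |A ∩ B| = 2 if q is even and |A ∩ B| = 1 if q is odd. -/
open Matrix

/-!
Let `K` be the quadratic extension of `F = GF(q)`, viewed as the plane `F²`. If `q ≢ 1 (mod 4)`,
every `x` in `F` is a square or minus a square, so every nonzero `z` in `K` has a multiple by a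
scalar of `F` whose norm to `F` is `1` or `-1`. The maps `x ↦ z * x` with `z` of norm `1` and
`x ↦ z * star x` with `z` of norm `-1` form a subgroup of `SL(2, q)` and move the point spanned by
`1` to the point spanned by `z`, so this subgroup is transitive on the projective line. Its image
`B` in `PSL(2, q)` is dihedral of order `2 * (q + 1) / gcd (2, q - 1)`. Transitivity gives the
factorization with a point stabilizer `A`, and counting the `q + 1` points gives `|A ∩ B|`.
-/

section Group

variable {G : Type*} [Group G]

/-- The homomorphism from the dihedral group of order `2 * n` that is `k` on the rotations and
sends the reflection `sr 0` to `s`. The hypothesis says that the images of all reflections square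
to `1`; equivalently, `s` squares to `1` and inverts the image of `k`. -/
def dihedralLift {n : ℕ} (k : Multiplicative (ZMod n) →* G) (s : G)
    (h : ∀ i, s * k i * (s * k i) = 1) : DihedralGroup n →* G where
  toFun
    | .r i => k (.ofAdd i)
    | .sr i => s * k (.ofAdd i)
  map_one' := map_one k
  map_mul' := by
    have conj_eq_inv (i) : s * k i * s = (k i)⁻¹ :=
      eq_inv_of_mul_eq_one_left (by rw [mul_assoc, h])
    have swap (i) : k i * s = s * (k i)⁻¹ := by
      have hs : s⁻¹ = s := inv_eq_of_mul_eq_one_left (by simpa using h 1)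
      rw [← conj_eq_inv, ← mul_assoc, ← mul_assoc, mul_eq_one_iff_eq_inv.mpr hs.symm, one_mul]
    rintro (i | i) (j | j)
    · exact map_mul k _ _
    · change s * k (.ofAdd (j - i)) = k (.ofAdd i) * (s * k (.ofAdd j))
      rw [← mul_assoc, swap, sub_eq_neg_add, ofAdd_add, ofAdd_neg, map_mul, map_inv, mul_assoc]
    · change s * k (.ofAdd (i + j)) = s * k (.ofAdd i) * k (.ofAdd j)
      rw [ofAdd_add, map_mul, mul_assoc]
    · change k (.ofAdd (j - i)) = s * k (.ofAdd i) * (s * k (.ofAdd j))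
      rw [← mul_assoc, conj_eq_inv, sub_eq_neg_add, ofAdd_add, ofAdd_neg, map_mul, map_inv]

theorem nonempty_mulEquiv_dihedralGroup_of_index_eq_two (T : Subgroup G) [IsCyclic T]
    (hT : T.index = 2) (hsq : ∀ g ∉ T, g * g = 1) :
    Nonempty (G ≃* DihedralGroup (Nat.card T)) := by
  obtain ⟨s, hs, -⟩ := Subgroup.index_eq_two_iff_exists_notMem_and.mp hT
  have reflection_notMem (t : T) : s * t ∉ T := fun h ↦ hs ((T.mul_mem_cancel_right t.2).mp h)
  let e : Multiplicative (ZMod (Nat.card T)) ≃* T := zmodCyclicMulEquiv inferInstance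
  let f := dihedralLift (T.subtype.comp e.toMonoidHom) s fun i ↦ hsq _ (reflection_notMem (e i))
  have f_injective : Function.Injective f := by
    refine (injective_iff_map_eq_one f).mpr ?_
    rintro (i | i) hi
    · exact congrArg (DihedralGroup.r ∘ Multiplicative.toAdd)
        ((map_eq_one_iff e e.injective).mp (Subtype.ext hi))
    · exact absurd (hi ▸ T.one_mem : f (.sr i) ∈ T) (reflection_notMem _)
  have f_surjective : Function.Surjective f := by
    intro g
    by_cases hg : g ∈ T
    · exact ⟨.r (e.symm ⟨g, hg⟩).toAdd, congrArg Subtype.val (e.apply_symm_apply ⟨g, hg⟩)⟩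
    · have hsg : s⁻¹ * g ∈ T := by
        simp only [Subgroup.mul_mem_iff_of_index_two hT, inv_mem_iff, hs, hg]
      refine ⟨.sr (e.symm ⟨_, hsg⟩).toAdd, ?_⟩
      change s * e (e.symm ⟨_, hsg⟩) = g
      rw [e.apply_symm_apply, mul_inv_cancel_left]
  exact ⟨(MulEquiv.ofBijective f ⟨f_injective, f_surjective⟩).symm⟩

theorem nonempty_mulEquiv_dihedralGroup_of_relIndex_eq_two {T B : Subgroup G} [IsCyclic T]
    (hTB : T ≤ B) (hT : T.relIndex B = 2) (hsq : ∀ g ∈ B, g ∉ T → g * g = 1) :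
    Nonempty (B ≃* DihedralGroup (Nat.card T)) := by
  let e := Subgroup.subgroupOfEquivOfLe hTB
  have : IsCyclic (T.subgroupOf B) := isCyclic_of_surjective e.symm e.symm.surjective
  rw [← Nat.card_congr e.toEquiv]
  exact nonempty_mulEquiv_dihedralGroup_of_index_eq_two _ hT fun g hg ↦
    Subtype.ext (hsq g g.2 hg)

theorem card_mul_relIndex {H K : Subgroup G} (hHK : H ≤ K) :
    Nat.card H * H.relIndex K = Nat.card K := by
  simpa only [Subgroup.relIndex_bot_left] using Subgroup.relIndex_mul_relIndex ⊥ H K bot_le hHK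

theorem card_map_mk'_mul_card {N H : Subgroup G} [N.Normal] (hNH : N ≤ H) :
    Nat.card (H.map (QuotientGroup.mk' N)) * Nat.card N = Nat.card H := by
  rw [← Subgroup.relIndex_ker, QuotientGroup.ker_mk', mul_comm, card_mul_relIndex hNH]

end Group

section Action

variable {G X : Type*} [Group G] [MulAction G X] (H : Subgroup G) [MulAction.IsPretransitive H X]

theorem exists_mem_stabilizer_mul_mem_of_isPretransitive (x : X) (g : G) :
    ∃ a ∈ MulAction.stabilizer G x, ∃ h ∈ H, g = a * h := by
  obtain ⟨h, hh⟩ := MulAction.exists_smul_eq H x (g⁻¹ • x)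
  refine ⟨g * h, ?_, (h : G)⁻¹, inv_mem h.2, (mul_inv_cancel_right g h.1).symm⟩
  rw [MulAction.mem_stabilizer_iff, mul_smul, smul_eq_iff_eq_inv_smul]
  exact hh

theorem card_stabilizer_inf_mul_card (x : X) :
    Nat.card (MulAction.stabilizer G x ⊓ H : Subgroup G) * Nat.card X = Nat.card H := by
  rw [← MulAction.index_stabilizer_of_transitive H x]
  calc _ = Nat.card (MulAction.stabilizer G x ⊓ H : Subgroup G)
        * (MulAction.stabilizer G x ⊓ H).relIndex H := by rw [Subgroup.inf_relIndex_right]; rfl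
    _ = Nat.card H := card_mul_relIndex inf_le_right

end Action

section FiniteField

theorem isSquare_or_isSquare_neg {F : Type*} [Field F] [Fintype F] (h : Fintype.card F % 4 ≠ 1)
    (x : F) : IsSquare x ∨ IsSquare (-x) := by
  classical
  by_cases hF : ringChar F = 2
  · exact .inl (FiniteField.isSquare_of_char_two hF x)
  rcases eq_or_ne x 0 with rfl | hx
  · exact .inl .zero
  have neg_one_not_isSquare : ¬ IsSquare (-1 : F) := by
    have card_odd := mt FiniteField.even_card_iff_char_two.mpr hF
    rw [FiniteField.isSquare_neg_one_iff]
    lia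
  rw [← quadraticChar_one_iff_isSquare hx, ← quadraticChar_one_iff_isSquare (neg_ne_zero.mpr hx),
    ← neg_one_mul x, map_mul, quadraticChar_neg_one_iff_not_isSquare.mpr neg_one_not_isSquare,
    neg_one_mul, neg_eq_iff_eq_neg]
  exact quadraticChar_dichotomy hx

theorem card_specialLinearGroup_mul_card_units (n R : Type*) [Fintype n] [DecidableEq n]
    [Nonempty n] [CommRing R] :
    Nat.card (SpecialLinearGroup n R) * Nat.card Rˣ = Nat.card (GL n R) := by
  let det : GL n R →* Rˣ := GeneralLinearGroup.det
  have range_toGL : SpecialLinearGroup.toGL.range = det.ker :=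
    SetLike.coe_injective SpecialLinearGroup.range_toGL
  calc _ = Nat.card det.ker * det.ker.index := by
        rw [Subgroup.index_ker, MonoidHom.range_eq_top.mpr GeneralLinearGroup.det_surjective,
          Subgroup.card_top, ← range_toGL,
          Nat.card_congr (MonoidHom.ofInjective SpecialLinearGroup.toGL_injective).toEquiv]
    _ = Nat.card (GL n R) := Subgroup.card_mul_index _

variable {F : Type*} [Field F] [Finite F]

theorem exists_forall_sq_ne_add {b : F} (hb : b ≠ 0) : ∃ a : F, ∀ r, r ^ 2 ≠ a + b * r := by
  have not_injective : ¬ Function.Injective fun r : F ↦ r ^ 2 - b * r := fun h ↦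
    hb (h (by ring : b ^ 2 - b * b = 0 ^ 2 - b * 0))
  obtain ⟨a, ha⟩ := not_forall.mp (mt Finite.injective_iff_surjective.mpr not_injective)
  exact ⟨a, fun r hr ↦ ha ⟨r, sub_eq_of_eq_add hr⟩⟩

theorem card_specialLinearGroup_fin_two :
    Nat.card (SpecialLinearGroup (Fin 2) F) =
      (Nat.card F + 1) * (Nat.card F * (Nat.card F - 1)) := by
  have := Fintype.ofFinite F
  refine Nat.eq_of_mul_eq_mul_right (Nat.sub_pos_of_lt (Finite.one_lt_card (α := F))) ?_
  rw [← Nat.card_units, card_specialLinearGroup_mul_card_units, card_GL_field, Fin.prod_univ_two,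
    Nat.card_units, Fin.val_zero, Fin.val_one, ← Nat.card_eq_fintype_card, pow_zero, pow_one]
  nth_rw 1 [← one_pow 2]
  rw [Nat.sq_sub_sq, sq, ← Nat.mul_sub_one]
  ring

theorem card_center_specialLinearGroup_fin_two :
    Nat.card (Subgroup.center (SpecialLinearGroup (Fin 2) F)) = Nat.gcd 2 (Nat.card F - 1) := by
  rw [Nat.card_congr (SpecialLinearGroup.center_equiv_rootsOfUnity' 0).toEquiv, Fintype.card_fin]
  have rootsOfUnity_eq_ker : rootsOfUnity 2 F = (powMonoidHom (α := Fˣ) 2).ker := rfl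
  rw [rootsOfUnity_eq_ker, IsCyclic.card_powMonoidHom_ker, Nat.gcd_comm, Nat.card_units]

end FiniteField

section NormOne

variable (F : Type*) [Field F] [Finite F] (a b : F) [Fact (∀ r, r ^ 2 ≠ a + b * r)]

theorem surjective_unitsMap_quadraticAlgebra_norm :
    Function.Surjective (Units.map (QuadraticAlgebra.norm : QuadraticAlgebra F a b →* F)) := by
  have norm_eq : (QuadraticAlgebra.norm : QuadraticAlgebra F a b →* F) = Algebra.norm F :=
    MonoidHom.ext fun z ↦ (QuadraticAlgebra.det_toLinearMap_eq_norm z).symm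
  have : Finite (QuadraticAlgebra F a b) := .of_equiv _ (QuadraticAlgebra.equivProd a b).symm
  rw [norm_eq]
  exact FiniteField.unitsMap_norm_surjective F _

theorem card_ker_unitsMap_quadraticAlgebra_norm :
    Nat.card (Units.map (QuadraticAlgebra.norm : QuadraticAlgebra F a b →* F)).ker =
      Nat.card F + 1 := by
  have h := Subgroup.card_mul_index
    (Units.map (QuadraticAlgebra.norm : QuadraticAlgebra F a b →* F)).ker
  rw [Subgroup.index_ker, MonoidHom.range_eq_top.mpr
    (surjective_unitsMap_quadraticAlgebra_norm F a b), Subgroup.card_top, Nat.card_units,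
    Nat.card_units, Nat.card_congr (QuadraticAlgebra.equivProd a b), Nat.card_prod] at h
  refine Nat.eq_of_mul_eq_mul_right (Nat.sub_pos_of_lt Finite.one_lt_card) (h.trans ?_)
  rw [← sq, ← Nat.sq_sub_sq, one_pow]

end NormOne

section Torus

variable {R : Type*} [CommRing R] {a b : R}

/-- The matrix of multiplication by an element of `QuadraticAlgebra R a b` in the basis `1, ω`. -/
noncomputable abbrev mulMatrix : QuadraticAlgebra R a b →ₐ[R] Matrix (Fin 2) (Fin 2) R :=
  Algebra.leftMulMatrix (QuadraticAlgebra.basis a b)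

theorem mulMatrix_eq_of (z : QuadraticAlgebra R a b) :
    mulMatrix z = !![z.re, a * z.im; z.im, z.re + b * z.im] := by
  ext i j
  fin_cases i <;> fin_cases j <;> simp [Algebra.leftMulMatrix_eq_repr_mul, QuadraticAlgebra.basis]

theorem det_mulMatrix (z : QuadraticAlgebra R a b) :
    (mulMatrix z).det = QuadraticAlgebra.norm z := by
  rw [mulMatrix_eq_of, det_fin_two_of, QuadraticAlgebra.norm_def]
  ring

/-- The matrix of the conjugation `star` of `QuadraticAlgebra R a b` in the basis `1, ω`. -/
def conjMatrix (b : R) : Matrix (Fin 2) (Fin 2) R := !![1, b; 0, -1]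

theorem conjMatrix_mul_self (b : R) : conjMatrix b * conjMatrix b = 1 := by
  simp [conjMatrix, one_fin_two]

theorem det_mulMatrix_mul_conjMatrix (z : QuadraticAlgebra R a b) :
    (mulMatrix z * conjMatrix b).det = -QuadraticAlgebra.norm z := by
  rw [det_mul, det_mulMatrix, conjMatrix, det_fin_two_of]
  ring

theorem conjMatrix_mul_mulMatrix (z : QuadraticAlgebra R a b) :
    conjMatrix b * mulMatrix z =
      mulMatrix (star z) * conjMatrix b := by
  simp only [conjMatrix, mulMatrix_eq_of, mul_fin_two, QuadraticAlgebra.re_star,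
    QuadraticAlgebra.im_star]
  congrm !![?_, ?_; ?_, ?_] <;> ring

theorem mulMatrix_mul_conjMatrix_mul (z w : QuadraticAlgebra R a b) :
    mulMatrix z * conjMatrix b * (mulMatrix w * conjMatrix b) = mulMatrix (z * star w) := by
  rw [mul_assoc, ← mul_assoc (conjMatrix b), conjMatrix_mul_mulMatrix, mul_assoc (mulMatrix _),
    conjMatrix_mul_self, mul_one, map_mul]

theorem mulMatrix_ne_conjMatrix (hb : b ≠ 0) (z : QuadraticAlgebra R a b) :
    mulMatrix z ≠ conjMatrix b := by
  intro h
  have him : z.im = 0 := by simpa [mulMatrix_eq_of, conjMatrix] using congr_fun₂ h 1 0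
  have hb' : a * z.im = b := by simpa [mulMatrix_eq_of, conjMatrix] using congr_fun₂ h 0 1
  exact hb (by rw [← hb', him, mul_zero])

variable (a b) in
/-- The embedding of the norm-one group of `QuadraticAlgebra R a b` into `SL(2, R)`, by
multiplication in the basis `1, ω`. Its image is a torus, non-split if the algebra is a field. -/
noncomputable def normOneToSL :
    (Units.map (QuadraticAlgebra.norm : QuadraticAlgebra R a b →* R)).ker →*
      SpecialLinearGroup (Fin 2) R where
  toFun u := ⟨mulMatrix (u.1 : QuadraticAlgebra R a b),
    (det_mulMatrix (u.1 : QuadraticAlgebra R a b)).trans (congrArg Units.val u.2)⟩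
  map_one' := Subtype.ext (map_one _)
  map_mul' _ _ := Subtype.ext (map_mul _ _ _)

theorem normOneToSL_injective : Function.Injective (normOneToSL a b) := fun _ _ h ↦
  Subtype.ext (Units.ext (Algebra.leftMulMatrix_injective (QuadraticAlgebra.basis a b)
    (congrArg Subtype.val h)))

theorem mem_range_normOneToSL {g : SpecialLinearGroup (Fin 2) R} :
    g ∈ (normOneToSL a b).range ↔
      ∃ z : QuadraticAlgebra R a b, mulMatrix z = (g : Matrix (Fin 2) (Fin 2) R) := by
  refine ⟨fun ⟨u, hu⟩ ↦ ⟨(u.1 : QuadraticAlgebra R a b), congrArg Subtype.val hu⟩, ?_⟩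
  rintro ⟨z, hz⟩
  have norm_eq_one : QuadraticAlgebra.norm z = 1 := by
    rw [← det_mulMatrix, hz, g.det_coe]
  have hunit : IsUnit z := QuadraticAlgebra.isUnit_iff_norm_isUnit.mpr (norm_eq_one ▸ isUnit_one)
  exact ⟨⟨hunit.unit, Units.ext norm_eq_one⟩, Subtype.ext hz⟩

theorem center_le_range_normOneToSL :
    Subgroup.center (SpecialLinearGroup (Fin 2) R) ≤ (normOneToSL a b).range := by
  intro g hg
  obtain ⟨r, -, hr⟩ := Matrix.SpecialLinearGroup.mem_center_iff.mp hg
  exact mem_range_normOneToSL.mpr ⟨algebraMap R _ r, (mulMatrix.commutes r).trans hr⟩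

variable (a b) in
/-- The extension of the torus `(normOneToSL a b).range` by reflections: it consists of the maps
`x ↦ z * x` with `norm z = 1` and `x ↦ z * star x` with `norm z = -1`, both of determinant one. -/
noncomputable def extendedTorus : Subgroup (SpecialLinearGroup (Fin 2) R) where
  carrier := {g | ∃ z : QuadraticAlgebra R a b,
    mulMatrix z = (g : Matrix (Fin 2) (Fin 2) R) ∨ mulMatrix z * conjMatrix b = g}
  one_mem' := ⟨1, .inl (map_one _)⟩
  mul_mem' := by
    rintro g h ⟨z, hz⟩ ⟨w, hw⟩
    change ∃ _, _ = (g * h : Matrix (Fin 2) (Fin 2) R) ∨ _ = (g * h : Matrix (Fin 2) (Fin 2) R)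
    rcases hz with hz | hz <;> rcases hw with hw | hw <;> rw [← hz, ← hw]
    · exact ⟨z * w, .inl (map_mul _ _ _)⟩
    · exact ⟨z * w, .inr (by rw [map_mul, mul_assoc])⟩
    · exact ⟨z * star w, .inr (by rw [map_mul, mul_assoc, mul_assoc, conjMatrix_mul_mulMatrix])⟩
    · exact ⟨z * star w, .inl (mulMatrix_mul_conjMatrix_mul z w).symm⟩
  inv_mem' := by
    rintro g ⟨z, hz | hz⟩
    · refine ⟨star z, .inl (Eq.trans ?_ (Matrix.SpecialLinearGroup.coe_inv g).symm)⟩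
      simp only [← hz, mulMatrix_eq_of, adjugate_fin_two_of, QuadraticAlgebra.re_star,
        QuadraticAlgebra.im_star]
      congrm !![?_, ?_; ?_, ?_] <;> ring
    · refine ⟨-z, .inr (Eq.trans ?_ (Matrix.SpecialLinearGroup.coe_inv g).symm)⟩
      simp only [← hz, conjMatrix, mulMatrix_eq_of, mul_fin_two, adjugate_fin_two_of,
        QuadraticAlgebra.re_neg, QuadraticAlgebra.im_neg]
      congrm !![?_, ?_; ?_, ?_] <;> ring

theorem range_normOneToSL_le_extendedTorus : (normOneToSL a b).range ≤ extendedTorus a b :=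
  fun _ hg ↦ (mem_range_normOneToSL.mp hg).imp fun _ ↦ .inl

theorem exists_of_mem_extendedTorus_of_notMem_range {g : SpecialLinearGroup (Fin 2) R}
    (hg : g ∈ extendedTorus a b) (hgT : g ∉ (normOneToSL a b).range) :
    ∃ z : QuadraticAlgebra R a b,
      QuadraticAlgebra.norm z = -1 ∧ mulMatrix z * conjMatrix b = g := by
  obtain ⟨z, hz⟩ := hg
  have hz := hz.resolve_left fun h ↦ hgT (mem_range_normOneToSL.mpr ⟨z, h⟩)
  refine ⟨z, ?_, hz⟩
  rw [← neg_eq_iff_eq_neg, ← det_mulMatrix_mul_conjMatrix, hz, g.det_coe]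

theorem mul_self_eq_neg_one_of_mem_extendedTorus {g : SpecialLinearGroup (Fin 2) R}
    (hg : g ∈ extendedTorus a b) (hgT : g ∉ (normOneToSL a b).range) : g * g = -1 := by
  obtain ⟨z, hnorm, hz⟩ := exists_of_mem_extendedTorus_of_notMem_range hg hgT
  refine Subtype.ext ?_
  calc (g * g : Matrix (Fin 2) (Fin 2) R) = mulMatrix (z * star z) := by
        rw [← hz, mulMatrix_mul_conjMatrix_mul]
    _ = -1 := by
        rw [← QuadraticAlgebra.algebraMap_norm_eq_mul_star, hnorm, map_neg, map_one, map_neg,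
          map_one]

theorem notMem_range_normOneToSL_of_eq_mul_conjMatrix (hb : b ≠ 0)
    {g : SpecialLinearGroup (Fin 2) R} {z : QuadraticAlgebra R a b}
    (hnorm : QuadraticAlgebra.norm z = -1) (hz : mulMatrix z * conjMatrix b = g) :
    g ∉ (normOneToSL a b).range := by
  intro hg
  obtain ⟨w, hw⟩ := mem_range_normOneToSL.mp hg
  have neg_star_mul_self : -star z * z = 1 := by
    rw [neg_mul, mul_comm, ← QuadraticAlgebra.algebraMap_norm_eq_mul_star, hnorm, map_neg, map_one,
      neg_neg]
  refine mulMatrix_ne_conjMatrix hb (-star z * w) ?_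
  rw [map_mul, hw, ← hz, ← mul_assoc, ← map_mul, neg_star_mul_self, map_one, one_mul]

theorem relIndex_range_normOneToSL_extendedTorus (hb : b ≠ 0)
    (hnorm : ∃ z : QuadraticAlgebra R a b, QuadraticAlgebra.norm z = -1) :
    (normOneToSL a b).range.relIndex (extendedTorus a b) = 2 := by
  obtain ⟨z, hz⟩ := hnorm
  let s : SpecialLinearGroup (Fin 2) R := ⟨mulMatrix z * conjMatrix b, by
    rw [det_mulMatrix_mul_conjMatrix, hz, neg_neg]⟩
  refine Subgroup.relIndex_eq_two_iff_exists_notMem_and.mpr ⟨s, ⟨z, .inr rfl⟩,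
    notMem_range_normOneToSL_of_eq_mul_conjMatrix hb hz rfl, fun g hg ↦ ?_⟩
  refine or_iff_not_imp_right.mpr fun hgT ↦ ?_
  obtain ⟨w, -, hw⟩ := exists_of_mem_extendedTorus_of_notMem_range hg hgT
  refine mem_range_normOneToSL.mpr ⟨w * star z, ?_⟩
  rw [← mulMatrix_mul_conjMatrix_mul, hw]
  rfl

end Torus

section Transitive

open scoped LinearAlgebra.Projectivization

variable {F : Type*} [Field F] {a b : F}

theorem mulMatrix_mulVec (z : QuadraticAlgebra F a b) :
    mulMatrix z *ᵥ ![1, 0] = ![z.re, z.im] := by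
  ext i
  fin_cases i <;> simp [mulMatrix_eq_of]

theorem conjMatrix_mulVec (b : F) : conjMatrix b *ᵥ ![1, 0] = ![1, 0] := by
  ext i
  fin_cases i <;> simp [conjMatrix]

theorem exists_mem_extendedTorus_mulVec_eq {z : QuadraticAlgebra F a b}
    (hz : QuadraticAlgebra.norm z = 1 ∨ QuadraticAlgebra.norm z = -1) :
    ∃ g ∈ extendedTorus a b, g *ᵥ ![1, 0] = ![z.re, z.im] := by
  rcases hz with hz | hz
  · exact ⟨⟨mulMatrix z, by rw [det_mulMatrix, hz]⟩, ⟨z, .inl rfl⟩, mulMatrix_mulVec z⟩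
  · refine ⟨⟨mulMatrix z * conjMatrix b, ?_⟩, ⟨z, .inr rfl⟩, ?_⟩
    · rw [det_mulMatrix_mul_conjMatrix, hz, neg_neg]
    · rw [← mulVec_mulVec, conjMatrix_mulVec, mulMatrix_mulVec]

variable [Fact (∀ r, r ^ 2 ≠ a + b * r)]

theorem exists_smul_norm_eq (hF : ∀ x : F, IsSquare x ∨ IsSquare (-x))
    {z : QuadraticAlgebra F a b} (hz : z ≠ 0) :
    ∃ l : Fˣ, QuadraticAlgebra.norm (l • z) = 1 ∨ QuadraticAlgebra.norm (l • z) = -1 := by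
  have norm_ne_zero : QuadraticAlgebra.norm z ≠ 0 :=
    QuadraticAlgebra.norm_eq_zero_iff_eq_zero.not.mpr hz
  have norm_smul (l : F) : QuadraticAlgebra.norm (l • z) = l * l * QuadraticAlgebra.norm z := by
    simp only [QuadraticAlgebra.norm_def, QuadraticAlgebra.re_smul, QuadraticAlgebra.im_smul,
      smul_eq_mul]
    ring
  obtain ⟨l, hl⟩ : ∃ l : F,
      QuadraticAlgebra.norm (l • z) = 1 ∨ QuadraticAlgebra.norm (l • z) = -1 := by
    rcases hF (QuadraticAlgebra.norm z)⁻¹ with ⟨l, hl⟩ | ⟨l, hl⟩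
    · exact ⟨l, .inl (by rw [norm_smul, ← hl, inv_mul_cancel₀ norm_ne_zero])⟩
    · exact ⟨l, .inr (by rw [norm_smul, ← hl, neg_mul, inv_mul_cancel₀ norm_ne_zero])⟩
  have l_ne_zero : l ≠ 0 := by
    rintro rfl
    simp at hl
  exact ⟨.mk0 l l_ne_zero, hl⟩

theorem isPretransitive_extendedTorus (hF : ∀ x : F, IsSquare x ∨ IsSquare (-x)) :
    MulAction.IsPretransitive (extendedTorus a b) (ℙ F (Fin 2 → F)) := by
  have e₀_ne_zero : (![1, 0] : Fin 2 → F) ≠ 0 := fun h ↦ one_ne_zero (congrFun h 0)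
  refine (MulAction.isPretransitive_iff_base (.mk F ![1, 0] e₀_ne_zero)).mpr fun p ↦ ?_
  induction p with | h v hv
  let z : QuadraticAlgebra F a b := ⟨v 0, v 1⟩
  have hz : z ≠ 0 := fun h ↦ hv (by
    ext i; fin_cases i
    exacts [congrArg QuadraticAlgebra.re h, congrArg QuadraticAlgebra.im h])
  obtain ⟨l, hl⟩ := exists_smul_norm_eq hF hz
  obtain ⟨g, hg, hgv⟩ := exists_mem_extendedTorus_mulVec_eq hl
  refine ⟨⟨g, hg⟩, (Projectivization.mk_eq_mk_iff F _ _ _ _).mpr ⟨l, ?_⟩⟩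
  change l • v = g *ᵥ ![1, 0]
  rw [hgv]
  ext i
  fin_cases i <;> rfl

end Transitive

section Projective

open scoped LinearAlgebra.Projectivization

variable {F : Type*} [Field F] {a b : F}

theorem card_projectiveLine (F : Type*) [Field F] [Finite F] :
    Nat.card (ℙ F (Fin 2 → F)) = Nat.card F + 1 :=
  Projectivization.card_of_finrank_two F _ (Module.finrank_fin_fun F)

instance nontrivial_projectiveLine : Nontrivial (ℙ F (Fin 2 → F)) := by
  have e₀_ne_zero : (![1, 0] : Fin 2 → F) ≠ 0 := fun h ↦ one_ne_zero (congrFun h 0)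
  have e₁_ne_zero : (![0, 1] : Fin 2 → F) ≠ 0 := fun h ↦ one_ne_zero (congrFun h 1)
  refine ⟨.mk F ![1, 0] e₀_ne_zero, .mk F ![0, 1] e₁_ne_zero, fun h ↦ ?_⟩
  obtain ⟨l, hl⟩ := (Projectivization.mk_eq_mk_iff' F _ _ _ _).mp h
  simpa using congrFun hl 0

theorem isCoatom_stabilizer_projectiveLine (x : ℙ F (Fin 2 → F)) :
    IsCoatom (MulAction.stabilizer (ProjectiveSpecialLinearGroup (Fin 2) F) x) :=
  MulAction.IsPreprimitive.isCoatom_stabilizer_of_isPreprimitive _ x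

theorem card_projectiveSpecialLinearGroup_mul [Finite F] :
    Nat.card (ProjectiveSpecialLinearGroup (Fin 2) F) * Nat.gcd 2 (Nat.card F - 1) =
      (Nat.card F + 1) * (Nat.card F * (Nat.card F - 1)) := by
  rw [← card_center_specialLinearGroup_fin_two (F := F), ← card_specialLinearGroup_fin_two,
    mul_comm]
  exact Subgroup.card_mul_index _

theorem card_stabilizer_projectiveLine_mul [Finite F] (x : ℙ F (Fin 2 → F)) :
    Nat.card (MulAction.stabilizer (ProjectiveSpecialLinearGroup (Fin 2) F) x) *
      Nat.gcd 2 (Nat.card F - 1) = Nat.card F * (Nat.card F - 1) := by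
  have h := Subgroup.card_mul_index
    (MulAction.stabilizer (ProjectiveSpecialLinearGroup (Fin 2) F) x)
  rw [MulAction.index_stabilizer_of_transitive, card_projectiveLine] at h
  refine Nat.eq_of_mul_eq_mul_left (Nat.succ_pos (Nat.card F)) ?_
  rw [Nat.succ_eq_add_one, ← card_projectiveSpecialLinearGroup_mul, ← h]
  ring

variable (a b) in
/-- The image of the torus `(normOneToSL a b).range` in `PSL(2, F)`. -/
noncomputable def projectiveTorus : Subgroup (ProjectiveSpecialLinearGroup (Fin 2) F) :=
  (normOneToSL a b).range.map (QuotientGroup.mk' _)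

variable (a b) in
/-- The image of `extendedTorus a b` in `PSL(2, F)`: the dihedral factor of the factorization. -/
noncomputable def projectiveExtendedTorus : Subgroup (ProjectiveSpecialLinearGroup (Fin 2) F) :=
  (extendedTorus a b).map (QuotientGroup.mk' _)

theorem projectiveTorus_le_projectiveExtendedTorus :
    projectiveTorus a b ≤ projectiveExtendedTorus a b :=
  Subgroup.map_mono range_normOneToSL_le_extendedTorus

theorem mul_self_eq_one_of_mem_projectiveExtendedTorus
    {g : ProjectiveSpecialLinearGroup (Fin 2) F} (hg : g ∈ projectiveExtendedTorus a b)
    (hgT : g ∉ projectiveTorus a b) : g * g = 1 := by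
  obtain ⟨h, hh, rfl⟩ := hg
  have h_sq := mul_self_eq_neg_one_of_mem_extendedTorus hh (mt (Subgroup.mem_map_of_mem _) hgT)
  rw [← map_mul, h_sq]
  refine (QuotientGroup.eq_one_iff _).mpr
    (Matrix.SpecialLinearGroup.mem_center_iff.mpr ⟨-1, ?_, ?_⟩)
  · exact neg_one_sq
  · rw [map_neg, map_one]
    rfl

theorem isPretransitive_projectiveExtendedTorus [Fact (∀ r, r ^ 2 ≠ a + b * r)]
    (hF : ∀ x : F, IsSquare x ∨ IsSquare (-x)) :
    MulAction.IsPretransitive (projectiveExtendedTorus a b) (ℙ F (Fin 2 → F)) where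
  exists_smul_eq x y := by
    have := isPretransitive_extendedTorus (a := a) (b := b) hF
    obtain ⟨g, hg⟩ := MulAction.exists_smul_eq (extendedTorus a b) x y
    exact ⟨⟨_, Subgroup.mem_map_of_mem _ g.2⟩, hg⟩

variable [Finite F] [Fact (∀ r, r ^ 2 ≠ a + b * r)]

instance isCyclic_projectiveTorus : IsCyclic (projectiveTorus a b) := by
  have : Finite (QuadraticAlgebra F a b) := .of_equiv _ (QuadraticAlgebra.equivProd a b).symm
  have : IsCyclic (normOneToSL a b).range :=
    isCyclic_of_surjective _ (normOneToSL a b).rangeRestrict_surjective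
  exact isCyclic_of_surjective _ ((QuotientGroup.mk' _).subgroupMap_surjective _)

theorem card_projectiveTorus_mul :
    Nat.card (projectiveTorus a b) * Nat.gcd 2 (Nat.card F - 1) = Nat.card F + 1 := by
  rw [← card_center_specialLinearGroup_fin_two (F := F), projectiveTorus,
    card_map_mk'_mul_card center_le_range_normOneToSL,
    ← Nat.card_congr (MonoidHom.ofInjective normOneToSL_injective).toEquiv,
    card_ker_unitsMap_quadraticAlgebra_norm]

theorem relIndex_projectiveTorus (hb : b ≠ 0) :
    (projectiveTorus a b).relIndex (projectiveExtendedTorus a b) = 2 := by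
  obtain ⟨u, hu⟩ := surjective_unitsMap_quadraticAlgebra_norm F a b (-1)
  rw [projectiveTorus, projectiveExtendedTorus, Subgroup.relIndex_map_map, QuotientGroup.ker_mk',
    sup_eq_left.mpr center_le_range_normOneToSL,
    sup_eq_left.mpr (center_le_range_normOneToSL.trans range_normOneToSL_le_extendedTorus),
    relIndex_range_normOneToSL_extendedTorus hb
      ⟨(u : QuadraticAlgebra F a b), congrArg Units.val hu⟩]

theorem nonempty_projectiveExtendedTorus_mulEquiv (hb : b ≠ 0) :
    Nonempty (projectiveExtendedTorus a b ≃* DihedralGroup (Nat.card (projectiveTorus a b))) :=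
  nonempty_mulEquiv_dihedralGroup_of_relIndex_eq_two
    projectiveTorus_le_projectiveExtendedTorus
    (relIndex_projectiveTorus hb)
    fun _ ↦ mul_self_eq_one_of_mem_projectiveExtendedTorus

theorem card_stabilizer_inf_projectiveExtendedTorus_mul (hb : b ≠ 0)
    [MulAction.IsPretransitive (projectiveExtendedTorus a b) (ℙ F (Fin 2 → F))]
    (x : ℙ F (Fin 2 → F)) :
    Nat.card (MulAction.stabilizer (ProjectiveSpecialLinearGroup (Fin 2) F) x ⊓
      projectiveExtendedTorus a b : Subgroup _) * Nat.gcd 2 (Nat.card F - 1) = 2 := by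
  refine Nat.eq_of_mul_eq_mul_right (Nat.succ_pos (Nat.card F)) ?_
  have card_inf := card_stabilizer_inf_mul_card (projectiveExtendedTorus a b) x
  rw [card_projectiveLine, ← card_mul_relIndex projectiveTorus_le_projectiveExtendedTorus,
    relIndex_projectiveTorus hb] at card_inf
  rw [Nat.succ_eq_add_one, mul_right_comm, card_inf, mul_right_comm, card_projectiveTorus_mul,
    mul_comm]

end Projective

theorem gcd_two_sub_one {q : ℕ} (hq : 0 < q) : Nat.gcd 2 (q - 1) = if Even q then 1 else 2 := by
  split_ifs with h
  · exact Nat.coprime_two_left.mpr (Nat.Even.sub_odd hq h odd_one)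
  · exact Nat.gcd_eq_left (Nat.Odd.sub_odd (Nat.not_even_iff_odd.mp h) odd_one).two_dvd

/-- for a prime power `q` with `q ≢ 1 (mod 4)` there is a factorization
`PSL(2,q) = AB` with `A` a maximal parabolic subgroup (a maximal subgroup of order
`q(q−1)/gcd(2,q−1)`) and `B` dihedral of order `2(q+1)` if `q` is even and of order `q+1`
if `q` is odd; moreover `|A ∩ B| = 2` if `q` is even and `|A ∩ B| = 1` if `q` is odd. -/
theorem stmt_11 (F : Type*) [Field F] [Fintype F] (q : ℕ) (hq : Fintype.card F = q)
    (hmod : q % 4 ≠ 1) :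
    ∃ A B : Subgroup (Matrix.ProjectiveSpecialLinearGroup (Fin 2) F),
      IsCoatom A ∧
      Nat.card A = q * (q - 1) / Nat.gcd 2 (q - 1) ∧
      Nonempty (B ≃* DihedralGroup (if Even q then q + 1 else (q + 1) / 2)) ∧
      (∀ g, ∃ a ∈ A, ∃ b ∈ B, g = a * b) ∧
      Nat.card (A ⊓ B : Subgroup (Matrix.ProjectiveSpecialLinearGroup (Fin 2) F))
        = (if Even q then 2 else 1) := by
  obtain ⟨a, ha⟩ := exists_forall_sq_ne_add (one_ne_zero (α := F))
  have : Fact (∀ r, r ^ 2 ≠ a + 1 * r) := ⟨ha⟩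
  have := isPretransitive_projectiveExtendedTorus (a := a) (b := 1)
    (isSquare_or_isSquare_neg (by rwa [hq]))
  obtain ⟨x⟩ : Nonempty (Projectivization F (Fin 2 → F)) := inferInstance
  have card_stabilizer := card_stabilizer_projectiveLine_mul x
  have card_torus := card_projectiveTorus_mul (a := a) (b := 1)
  have card_inf := card_stabilizer_inf_projectiveExtendedTorus_mul (a := a) (b := 1) one_ne_zero x
  rw [Nat.card_eq_fintype_card (α := F), hq] at card_stabilizer card_torus card_inf
  have gcd_eq := gcd_two_sub_one (hq ▸ Fintype.card_pos : 0 < q)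
  have card_torus_eq : Nat.card (projectiveTorus a 1) =
      if Even q then q + 1 else (q + 1) / 2 := by
    split_ifs at gcd_eq ⊢ <;> rw [gcd_eq] at card_torus <;> lia
  refine ⟨MulAction.stabilizer _ x, projectiveExtendedTorus a 1,
    isCoatom_stabilizer_projectiveLine x,
    Nat.eq_div_of_mul_eq_left (Nat.gcd_pos_of_pos_left _ two_pos).ne' card_stabilizer,
    card_torus_eq ▸ nonempty_projectiveExtendedTorus_mulEquiv one_ne_zero,
    exists_mem_stabilizer_mul_mem_of_isPretransitive _ x, ?_⟩
  split_ifs at gcd_eq ⊢ <;> rw [gcd_eq] at card_inf <;> lia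
end
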